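/- At the right endpoint x = b, the symmetric partial sums S_N(b) = ∑_{n=−N}^{N} C_n (f_n(b), g_n(b)) converge as N → ∞ to the vector (1/2)·[[1 − cos 2β, −sin 2β], [−sin 2β, 1 + cos 2β]]·(F₁(b), F₂(b))ᵀ, i.e., to (sin²β·F₁(b) − sin β cos β·F₂(b), −sin β cos β·F₁(b) + cos²β·F₂(b)). -/

import Mathlib

/-- The pair `(f,g)`, continuously differentiable on `[a,b]`, satisfies the
Dirac-type system with parameter `lam`:
`-g' + t g + (p - lam ρ) f = 0` and `f' + t f + (q - lam ρ) g = 0` on `[a,b]`. -/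
def SatisfiesDiracSystem (a b : ℝ) (p q t ρ : ℝ → ℝ) (lam : ℝ) (f g : ℝ → ℝ) : Prop :=
  ∃ f' g' : ℝ → ℝ,
    (∀ x ∈ Set.Icc a b, HasDerivWithinAt f (f' x) (Set.Icc a b) x) ∧
    (∀ x ∈ Set.Icc a b, HasDerivWithinAt g (g' x) (Set.Icc a b) x) ∧
    ContinuousOn f' (Set.Icc a b) ∧ ContinuousOn g' (Set.Icc a b) ∧
    (∀ x ∈ Set.Icc a b, -g' x + t x * g x + (p x - lam * ρ x) * f x = 0) ∧
    (∀ x ∈ Set.Icc a b, f' x + t x * f x + (q x - lam * ρ x) * g x = 0)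

/-- The separated boundary conditions
`f(a) cos α + g(a) sin α = 0` and `f(b) cos β + g(b) sin β = 0`. -/
def DiracBC (a b α β : ℝ) (f g : ℝ → ℝ) : Prop :=
  f a * Real.cos α + g a * Real.sin α = 0 ∧
  f b * Real.cos β + g b * Real.sin β = 0

/-- `lam` is an eigenvalue of the Dirac-type boundary-value problem. -/
def IsDiracEigenvalue (a b : ℝ) (p q t ρ : ℝ → ℝ) (α β lam : ℝ) : Prop :=
  ∃ f g : ℝ → ℝ,
    SatisfiesDiracSystem a b p q t ρ lam f g ∧
    (∃ x ∈ Set.Icc a b, (f x ≠ 0 ∨ g x ≠ 0)) ∧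
    DiracBC a b α β f g

/-!
Writing `z = g + if`, a gauge rotation followed by Liouville's change of variable turns the problem
into the canonical equation `Z' = iλZ + τ · conj Z` on `[0, π]` with `Im Z(0) = Im Z(π) = 0`, and
the assertion into `∑ ⟪F, Zₙ⟫ Zₙ(π) = Re F(π)`.

The solution with `Z(0) = 1` is `exp (iλx + W)` with `W = O(1 / (1 + |λ|))`. Its argument at `π`
increases with `λ`, so it equals `πy` for exactly one parameter `Λ(y) = y + O(1 / (1 + |y|))`, and
the eigenvalues are the `Λ(n)`. The eigenfunctions lie within `O(1 / (1 + |n|))` of the Fourier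
modes `exp (inx)`; being orthogonal and quadratically close to an orthogonal basis, they form a
basis.

To compute the sum at `π`, take the Parseval identity for `(Λ(k + 1/2) - L) F` and the solution `Y`
with parameter `Λ(k + 1/2)`, for which `Y(π)` is purely imaginary. Green's identity rewrites each of
its terms as a term of the endpoint sum plus boundary contributions, whose sums are compared with
`∑ 1 / (k + 1/2 - n) = 0` and `∑ (-1)ⁿ / (k + 1/2 - n) = (-1)ᵏ q`. The result is
`S = Re F(π) + (-1)ᵏ c + o(1)` as `k → ∞`; since `S` does not depend on `k`, both `c = 0` and
`S = Re F(π)`.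
-/

section DiracExpansion

open Set Filter MeasureTheory Complex
open scoped Topology ComplexConjugate Real

section Calculus

theorem integral_eq_sub_of_hasDerivWithinAt_Icc {E : Type*} [NormedAddCommGroup E]
    [NormedSpace ℝ E] [CompleteSpace E] {a b : ℝ} (hab : a ≤ b) {f f' : ℝ → E}
    (hf : ∀ x ∈ Icc a b, HasDerivWithinAt f (f' x) (Icc a b) x)
    (hf' : ContinuousOn f' (Icc a b)) : ∫ x in a..b, f' x = f b - f a :=
  intervalIntegral.integral_eq_sub_of_hasDerivAt_of_le hab
    (fun x hx => (hf x hx).continuousWithinAt)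
    (fun x hx => (hf x (Ioo_subset_Icc_self hx)).hasDerivAt (Icc_mem_nhds hx.1 hx.2))
    (hf'.intervalIntegrable_of_Icc hab)

theorem contDiffOn_one_of_hasDerivWithinAt_Icc {E : Type*} [NormedAddCommGroup E]
    [NormedSpace ℝ E] {a b : ℝ} (hab : a < b) {f f' : ℝ → E}
    (hf : ∀ x ∈ Icc a b, HasDerivWithinAt f (f' x) (Icc a b) x)
    (hf' : ContinuousOn f' (Icc a b)) : ContDiffOn ℝ 1 f (Icc a b) :=
  (contDiffOn_one_iff_derivWithin (uniqueDiffOn_Icc hab)).2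
    ⟨fun x hx => (hf x hx).differentiableWithinAt,
      hf'.congr fun x hx => (hf x hx).derivWithin (uniqueDiffOn_Icc hab x hx)⟩

theorem hasDerivWithinAt_integral_Icc {E : Type*} [NormedAddCommGroup E]
    [NormedSpace ℝ E] [CompleteSpace E] {a b x : ℝ} {f : ℝ → E} (hf : ContinuousOn f (Icc a b))
    (hx : x ∈ Icc a b) : HasDerivWithinAt (fun y => ∫ u in a..y, f u) (f x) (Icc a b) x :=
  have : Fact (x ∈ Icc a b) := ⟨hx⟩
  intervalIntegral.integral_hasDerivWithinAt_right
    ((hf.mono (Icc_subset_Icc_right hx.2)).intervalIntegrable_of_Icc hx.1)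
    (hf.stronglyMeasurableAtFilter_nhdsWithin measurableSet_Icc x) (hf x hx)

theorem norm_sub_le_of_norm_hasDerivWithinAt_Icc_le {E : Type*} [NormedAddCommGroup E]
    [NormedSpace ℝ E] {a b B : ℝ} {f f' : ℝ → E}
    (hf : ∀ x ∈ Icc a b, HasDerivWithinAt f (f' x) (Icc a b) x)
    (hB : ∀ x ∈ Icc a b, ‖f' x‖ ≤ B) {x : ℝ} (hx : x ∈ Icc a b) :
    ‖f x - f a‖ ≤ B * (b - a) := by
  have hab : a ≤ b := hx.1.trans hx.2
  have hB0 : 0 ≤ B := (norm_nonneg _).trans (hB a (left_mem_Icc.2 hab))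
  refine ((convex_Icc a b).norm_image_sub_le_of_norm_hasDerivWithin_le hf hB
    (left_mem_Icc.2 hab) hx).trans (mul_le_mul_of_nonneg_left ?_ hB0)
  rw [Real.norm_of_nonneg (sub_nonneg.2 hx.1)]
  exact sub_le_sub_right hx.2 a

theorem hasDerivWithinAt_re {f : ℝ → ℂ} {f' : ℂ} {s : Set ℝ} {x : ℝ}
    (hf : HasDerivWithinAt f f' s x) : HasDerivWithinAt (fun y => (f y).re) f'.re s x :=
  reCLM.hasFDerivAt.comp_hasDerivWithinAt x hf

theorem hasDerivWithinAt_im {f : ℝ → ℂ} {f' : ℂ} {s : Set ℝ} {x : ℝ}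
    (hf : HasDerivWithinAt f f' s x) : HasDerivWithinAt (fun y => (f y).im) f'.im s x :=
  imCLM.hasFDerivAt.comp_hasDerivWithinAt x hf

theorem norm_exp_mul_I_sub_exp_mul_I_le (s t : ℝ) : ‖cexp (s * I) - cexp (t * I)‖ ≤ |s - t| := by
  have h : cexp (s * I) - cexp (t * I) = cexp (t * I) * (cexp (I * (s - t : ℝ)) - 1) := by
    rw [mul_sub, ← Complex.exp_add]; push_cast; ring_nf
  rw [h, norm_mul, norm_exp_ofReal_mul_I, one_mul]
  exact Real.norm_exp_I_mul_ofReal_sub_one_le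

theorem norm_mul_exp_mul_I (z : ℂ) (s : ℝ) : ‖z * cexp (s * I)‖ = ‖z‖ := by
  rw [norm_mul, norm_exp_ofReal_mul_I, mul_one]

theorem exp_add_half_mul_pi_mul_I (k : ℕ) :
    cexp (((k + 1 / 2) * π : ℝ) * I) = ((-1) ^ k : ℝ) * I := by
  rw [show ((k : ℝ) + 1 / 2) * π = π / 2 + k * π by ring]
  refine Complex.ext ?_ ?_
  · rw [exp_ofReal_mul_I_re, Real.cos_add_nat_mul_pi, re_ofReal_mul]
    simp
  · rw [exp_ofReal_mul_I_im, Real.sin_add_nat_mul_pi, im_ofReal_mul]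
    simp

theorem norm_exp_sub_one_le_mul_of_norm_le {z : ℂ} {B : ℝ} (hz : ‖z‖ ≤ B) :
    ‖cexp z - 1‖ ≤ Real.exp B * ‖z‖ := by
  have h : ‖cexp z - 1‖ ≤ ‖z‖ * Real.exp ‖z‖ := by
    simpa using norm_exp_sub_sum_le_norm_mul_exp z 1
  exact h.trans (by rw [mul_comm]; gcongr)

end Calculus

section SymmetricSums

open SummationFilter

theorem hasSum_symmetricIcc_comp_add_one {E : Type*} [NormedAddCommGroup E] {u : ℤ → E}
    (hu : Tendsto u cofinite (𝓝 0)) {l : E} :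
    HasSum (fun n => u (n + 1)) l (symmetricIcc ℤ) ↔ HasSum u l (symmetricIcc ℤ) := by
  have hneg : Tendsto (fun N : ℕ => u (-(N : ℤ))) atTop (𝓝 0) :=
    hu.comp (Nat.cofinite_eq_atTop ▸
      Function.Injective.tendsto_cofinite fun m n h => by simpa using h)
  have hpos : Tendsto (fun N : ℕ => u ((N : ℤ) + 1)) atTop (𝓝 0) :=
    hu.comp (Nat.cofinite_eq_atTop ▸
      Function.Injective.tendsto_cofinite fun m n h => by simpa using h)
  have hdiff (N : ℕ) : ∑ n ∈ Finset.Icc (-(N : ℤ)) N, u n -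
      ∑ n ∈ Finset.Icc (-(N : ℤ)) N, u (n + 1) = u (-(N : ℤ)) - u (N + 1) := by
    rw [← Finset.sum_sub_distrib, Finset.sum_Icc_eq_sum_Ico_add _ (by lia), Finset.sum_Ico_int_sub]
    abel
  rw [hasSum_symmetricIcc_iff, hasSum_symmetricIcc_iff]
  refine ⟨fun h => ?_, fun h => ?_⟩
  · simpa [← hdiff] using h.add (hneg.sub hpos)
  · simpa [← hdiff] using h.sub (hneg.sub hpos)

theorem hasSum_symmetricIcc_comp_add {E : Type*} [NormedAddCommGroup E] {u : ℤ → E}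
    (hu : Tendsto u cofinite (𝓝 0)) {l : E} (h : HasSum u l (symmetricIcc ℤ)) (k : ℤ) :
    HasSum (fun n => u (n + k)) l (symmetricIcc ℤ) := by
  have hshift (k : ℤ) : Tendsto (fun n => u (n + k)) cofinite (𝓝 0) :=
    hu.comp (add_left_injective k).tendsto_cofinite
  induction k using Int.induction_on with
  | zero => simpa using h
  | succ i ih =>
    convert (hasSum_symmetricIcc_comp_add_one (hshift i)).2 ih using 3
    ring
  | pred i ih =>
    refine (hasSum_symmetricIcc_comp_add_one (hshift (-(i : ℤ) - 1))).1 ?_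
    convert ih using 3
    ring

end SymmetricSums

/-! ### The canonical equation and its Prüfer angle -/

/-- A continuously differentiable potential `τ` for the canonical Dirac equation
`Z' = iλZ + τ · conj Z` on `[0, π]`; the complex number `Z = g + if` encodes a real pair `(f, g)`,
so that the boundary conditions become `Im Z(0) = Im Z(π) = 0`. -/
structure DiracPotential where
  toFun : ℝ → ℂ
  contDiffOn : ContDiffOn ℝ 1 toFun (Icc 0 π)

namespace DiracPotential

instance : CoeFun DiracPotential fun _ => ℝ → ℂ := ⟨toFun⟩

/-- `Z` solves the canonical Dirac equation with potential `D` and spectral parameter `l`. -/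
def IsSolution (D : DiracPotential) (l : ℝ) (Z : ℝ → ℂ) : Prop :=
  ∀ x ∈ Icc 0 π, HasDerivWithinAt Z (I * l * Z x + D x * conj (Z x)) (Icc 0 π) x

variable (D : DiracPotential)

theorem exists_norm_le : ∃ M : ℝ, 0 ≤ M ∧ ∀ x ∈ Icc 0 π, ‖D x‖ ≤ M := by
  obtain ⟨M, hM⟩ := isCompact_Icc.exists_bound_of_continuousOn D.contDiffOn.continuousOn
  exact ⟨M, (norm_nonneg _).trans (hM 0 (by simp [Real.pi_nonneg])), hM⟩

theorem exists_phase (l : ℝ) : ∃ W : ℝ → ℂ, W 0 = 0 ∧ ∀ x ∈ Icc 0 π,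
    HasDerivWithinAt W (D x * cexp ((-2 * (l * x + (W x).im) : ℝ) * I)) (Icc 0 π) x := by
  obtain ⟨M, hM0, hM⟩ := D.exists_norm_le
  have hPL : IsPicardLindelof (fun x w => D x * cexp ((-2 * (l * x + w.im) : ℝ) * I))
      (⟨0, by simp [Real.pi_nonneg]⟩ : Icc (0 : ℝ) π) (0 : ℂ) ⟨M * π, by positivity⟩ 0
      ⟨M, hM0⟩ ⟨2 * M, by positivity⟩ := by
    refine ⟨fun x hx => LipschitzOnWith.of_dist_le_mul fun w _ w' _ => ?_, fun w _ => ?_,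
      fun x hx w _ => ?_, ?_⟩
    · rw [dist_eq_norm, dist_eq_norm, ← mul_sub, norm_mul]
      have him : |(w' - w).im| ≤ ‖w - w'‖ := by rw [norm_sub_rev]; exact abs_im_le_norm _
      calc ‖D x‖ * _ ≤ M * |-2 * (l * x + w.im) - -2 * (l * x + w'.im)| :=
            mul_le_mul (hM x hx) (norm_exp_mul_I_sub_exp_mul_I_le _ _) (norm_nonneg _) hM0
        _ = 2 * M * |(w' - w).im| := by
            rw [show -2 * (l * x + w.im) - -2 * (l * x + w'.im) = 2 * (w' - w).im by
              simp only [sub_im]; ring, abs_mul, abs_two]; ring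
        _ ≤ 2 * M * ‖w - w'‖ := by gcongr
    · exact D.contDiffOn.continuousOn.mul (by fun_prop)
    · exact (norm_mul_exp_mul_I _ _).trans_le (hM x hx)
    · change M * max (π - 0) (0 - 0) ≤ M * π - 0
      simp [Real.pi_nonneg]
  simpa using hPL.exists_eq_forall_mem_Icc_hasDerivWithinAt₀

/-- The logarithmic correction `W` of the solution `exp (iλx + W)` that equals `1` at `0`. -/
noncomputable def phase (l : ℝ) : ℝ → ℂ := (D.exists_phase l).choose

/-- The Prüfer angle `arg Z` of the solution that equals `1` at `0`. -/
noncomputable def angle (l x : ℝ) : ℝ := l * x + (D.phase l x).im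

/-- The solution of the canonical Dirac equation that equals `1` at `0`. -/
noncomputable def sol (l x : ℝ) : ℂ := Real.exp (D.phase l x).re * cexp (D.angle l x * I)

@[simp] theorem phase_zero (l : ℝ) : D.phase l 0 = 0 := (D.exists_phase l).choose_spec.1

@[simp] theorem angle_zero (l : ℝ) : D.angle l 0 = 0 := by simp [angle]

@[simp] theorem sol_zero (l : ℝ) : D.sol l 0 = 1 := by simp [sol]

variable {l x : ℝ}

theorem hasDerivWithinAt_phase (l : ℝ) (hx : x ∈ Icc 0 π) :
    HasDerivWithinAt (D.phase l) (D x * cexp ((-2 * D.angle l x : ℝ) * I)) (Icc 0 π) x :=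
  (D.exists_phase l).choose_spec.2 x hx

theorem hasDerivWithinAt_angle (l : ℝ) (hx : x ∈ Icc 0 π) : HasDerivWithinAt (D.angle l)
    (l + (D x * cexp ((-2 * D.angle l x : ℝ) * I)).im) (Icc 0 π) x :=
  (((hasDerivWithinAt_id x _).const_mul l).add
    (hasDerivWithinAt_im (D.hasDerivWithinAt_phase l hx))).congr_deriv (by rw [mul_one])

theorem sol_eq_exp (l x : ℝ) : D.sol l x = cexp (l * x * I + D.phase l x) := by
  rw [sol, angle, ofReal_exp, ← Complex.exp_add]
  congr 1
  conv_rhs => rw [← re_add_im (D.phase l x)]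
  push_cast
  ring

theorem conj_sol (l x : ℝ) :
    conj (D.sol l x) = D.sol l x * cexp ((-2 * D.angle l x : ℝ) * I) := by
  rw [sol, map_mul, conj_ofReal, ← exp_conj, map_mul, conj_ofReal, conj_I, mul_assoc,
    ← Complex.exp_add]
  push_cast
  ring_nf

theorem isSolution_sol (l : ℝ) : D.IsSolution l (D.sol l) := fun x hx => by
  have hlin : HasDerivWithinAt (fun x : ℝ => l * x * I) (l * I) (Icc 0 π) x := by
    simpa using (((hasDerivWithinAt_id x _).ofReal_comp).const_mul (l : ℂ)).mul_const I
  have h := (hlin.add (D.hasDerivWithinAt_phase l hx)).cexp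
  refine (h.congr_deriv ?_).congr_of_mem (fun y _ => D.sol_eq_exp l y) hx
  rw [conj_sol, sol_eq_exp, Pi.add_apply]
  ring

end DiracPotential

theorem pos_and_le_of_hasDerivWithinAt_linear {b c B : ℝ} (hb : 0 < b) (hc : 0 < c) {d h : ℝ → ℝ}
    (hd : ∀ x ∈ Icc 0 b, HasDerivWithinAt d (c + h x * d x) (Icc 0 b) x) (hd0 : d 0 = 0)
    (hh : ContinuousOn h (Icc 0 b)) (hB : ∀ x ∈ Icc 0 b, |h x| ≤ B) :
    0 < d b ∧ d b ≤ c * Real.exp (B * b) * b * Real.exp (B * b) := by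
  set H : ℝ → ℝ := fun x => ∫ y in 0..x, h y
  have hH (x : ℝ) (hx : x ∈ Icc 0 b) : HasDerivWithinAt H (h x) (Icc 0 b) x :=
    hasDerivWithinAt_integral_Icc hh hx
  have hHB (x : ℝ) (hx : x ∈ Icc 0 b) : |H x| ≤ B * b := by
    simpa [H] using norm_sub_le_of_norm_hasDerivWithinAt_Icc_le hH hB hx
  have he (x : ℝ) (hx : x ∈ Icc 0 b) :
      HasDerivWithinAt (fun x => d x * Real.exp (-H x)) (c * Real.exp (-H x)) (Icc 0 b) x :=
    ((hd x hx).mul (hH x hx).neg.exp).congr_deriv (by rw [Pi.neg_apply]; ring)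
  have hHc : ContinuousOn (fun x => c * Real.exp (-H x)) (Icc 0 b) := fun x hx =>
    ((hH x hx).continuousWithinAt.neg.rexp).const_mul c
  have hInt : ∫ x in 0..b, c * Real.exp (-H x) = d b * Real.exp (-H b) := by
    simpa [hd0] using integral_eq_sub_of_hasDerivWithinAt_Icc hb.le he hHc
  have hpos : 0 < d b * Real.exp (-H b) := hInt ▸ intervalIntegral.intervalIntegral_pos_of_pos_on
    (hHc.intervalIntegrable_of_Icc hb.le) (fun x _ => by positivity) hb
  have hle : d b * Real.exp (-H b) ≤ c * Real.exp (B * b) * b := by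
    have := intervalIntegral.norm_integral_le_of_norm_le_const (a := 0) (b := b)
      (f := fun x => c * Real.exp (-H x)) (C := c * Real.exp (B * b)) fun x hx => by
        rw [uIoc_of_le hb.le] at hx
        rw [Real.norm_of_nonneg (by positivity)]
        gcongr
        exact (neg_le_abs _).trans (hHB x (Ioc_subset_Icc_self hx))
    rw [hInt, sub_zero, abs_of_pos hb] at this
    exact (le_abs_self _).trans this
  refine ⟨pos_of_mul_pos_left hpos (Real.exp_nonneg _), ?_⟩
  calc d b = d b * Real.exp (-H b) * Real.exp (H b) := by
        rw [mul_assoc, ← Real.exp_add, neg_add_cancel, Real.exp_zero, mul_one]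
    _ ≤ c * Real.exp (B * b) * b * Real.exp (B * b) := by
        gcongr
        exact (le_abs_self _).trans (hHB b (right_mem_Icc.2 hb.le))

theorem sin_eq_sinc_mul (x : ℝ) : Real.sin x = Real.sinc x * x := by
  rcases eq_or_ne x 0 with rfl | hx
  · simp
  · rw [Real.sinc_of_ne_zero hx, div_mul_cancel₀ _ hx]

theorem im_mul_exp_sub_im_mul_exp (z : ℂ) (s t : ℝ) :
    (z * cexp ((-2 * s : ℝ) * I)).im - (z * cexp ((-2 * t : ℝ) * I)).im =
      -2 * Real.sinc (s - t) * (z * cexp ((-(s + t) : ℝ) * I)).re * (s - t) := by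
  have h : cexp ((-2 * s : ℝ) * I) - cexp ((-2 * t : ℝ) * I) =
      -2 * I * Real.sin (s - t) * cexp ((-(s + t) : ℝ) * I) := by
    rw [show ((-2 * s : ℝ) : ℂ) * I = (-(s + t) : ℝ) * I + -((s - t : ℝ) : ℂ) * I by
      push_cast; ring, show ((-2 * t : ℝ) : ℂ) * I = (-(s + t) : ℝ) * I + ((s - t : ℝ) : ℂ) * I by
      push_cast; ring, Complex.exp_add, Complex.exp_add, ofReal_sin, Complex.sin]
    linear_combination
      (cexp (-(↑(s - t)) * I) - cexp (↑(s - t) * I)) * cexp (↑(-(s + t)) * I) * I_sq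
  rw [← sub_im, ← mul_sub, h, show z * (-2 * I * Real.sin (s - t) * cexp ((-(s + t) : ℝ) * I)) =
    (-2 * Real.sin (s - t) : ℝ) * (I * (z * cexp ((-(s + t) : ℝ) * I))) by push_cast; ring,
    im_ofReal_mul, I_mul_im, sin_eq_sinc_mul]
  ring

namespace DiracPotential

variable (D : DiracPotential) {l x : ℝ}

/-- Integration by parts against the oscillating factor: the derivative stays bounded in `l`. -/
theorem hasDerivWithinAt_phase_add_potential_mul_exp (l : ℝ) (hx : x ∈ Icc 0 π) :
    HasDerivWithinAt (fun x => 2 * I * l * D.phase l x + D x * cexp ((-2 * D.angle l x : ℝ) * I))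
      ((derivWithin D (Icc 0 π) x -
        2 * I * (D x * cexp ((-2 * D.angle l x : ℝ) * I)).im * D x) *
          cexp ((-2 * D.angle l x : ℝ) * I)) (Icc 0 π) x := by
  have hτ := (D.contDiffOn.differentiableOn one_ne_zero x hx).hasDerivWithinAt
  have hexp := ((((D.hasDerivWithinAt_angle l hx).const_mul (-2)).ofReal_comp).mul_const I).cexp
  refine (((D.hasDerivWithinAt_phase l hx).const_mul (2 * I * l)).add
    (hτ.mul hexp)).congr_deriv ?_
  push_cast
  ring

theorem exists_abs_mul_norm_phase_le :
    ∃ B, 0 ≤ B ∧ ∀ l : ℝ, ∀ x ∈ Icc 0 π, |l| * ‖D.phase l x‖ ≤ B := by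
  obtain ⟨M, hM0, hM⟩ := D.exists_norm_le
  obtain ⟨M', hM'⟩ := isCompact_Icc.exists_bound_of_continuousOn
    (D.contDiffOn.continuousOn_derivWithin (uniqueDiffOn_Icc Real.pi_pos) le_rfl)
  have h0 : (0 : ℝ) ∈ Icc 0 π := by simp [Real.pi_nonneg]
  have hM'0 : 0 ≤ M' := (norm_nonneg _).trans (hM' 0 h0)
  refine ⟨(M' + 2 * M * M) * π + 2 * M, by positivity, fun l x hx => ?_⟩
  have hE (x : ℝ) (hx : x ∈ Icc 0 π) : ‖D x * cexp ((-2 * D.angle l x : ℝ) * I)‖ ≤ M :=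
    (norm_mul_exp_mul_I _ _).trans_le (hM x hx)
  have hdiff := norm_sub_le_of_norm_hasDerivWithinAt_Icc_le (B := M' + 2 * M * M)
    (fun x => D.hasDerivWithinAt_phase_add_potential_mul_exp l) (fun x hx => ?_) hx
  · have hsplit : 2 * (|l| * ‖D.phase l x‖) = ‖2 * I * l * D.phase l x‖ := by simp [mul_assoc]
    rw [phase_zero, mul_zero, zero_add, sub_zero] at hdiff
    rw [← add_sub_cancel_right (2 * I * l * D.phase l x) (D x * cexp ((-2 * D.angle l x : ℝ) * I)),
      ← sub_add_cancel (2 * I * l * D.phase l x + D x * cexp ((-2 * D.angle l x : ℝ) * I))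
        (D 0 * cexp ((-2 * D.angle l 0 : ℝ) * I))] at hsplit
    have hle := hsplit.trans_le ((norm_sub_le _ _).trans
      (add_le_add (norm_add_le_of_le hdiff (hE 0 h0)) (hE x hx)))
    have hnonneg : 0 ≤ |l| * ‖D.phase l x‖ := by positivity
    linarith
  · rw [norm_mul_exp_mul_I]
    refine (norm_sub_le _ _).trans (add_le_add (hM' x hx) ?_)
    simp only [norm_mul, norm_ofNat, norm_I, mul_one, norm_real]
    gcongr
    · exact (abs_im_le_norm _).trans (hE x hx)
    · exact hM x hx

theorem exists_norm_phase_le :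
    ∃ C, 0 ≤ C ∧ ∀ l : ℝ, ∀ x ∈ Icc 0 π, ‖D.phase l x‖ ≤ C / (1 + |l|) := by
  obtain ⟨M, hM0, hM⟩ := D.exists_norm_le
  obtain ⟨B, hB0, hB⟩ := D.exists_abs_mul_norm_phase_le
  refine ⟨M * π + B, add_nonneg (mul_nonneg hM0 Real.pi_nonneg) hB0, fun l x hx => ?_⟩
  have hbase : ‖D.phase l x‖ ≤ M * π := by
    simpa using norm_sub_le_of_norm_hasDerivWithinAt_Icc_le (fun x => D.hasDerivWithinAt_phase l)
      (fun x hx => (norm_mul_exp_mul_I _ _).trans_le (hM x hx)) hx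
  rw [le_div_iff₀ (by positivity)]
  linarith [hB l x hx]

theorem angle_pi_sub_bounds : ∃ K, 0 < K ∧ ∀ l m, l < m →
    0 < D.angle m π - D.angle l π ∧ D.angle m π - D.angle l π ≤ K * (m - l) := by
  obtain ⟨M, -, hM⟩ := D.exists_norm_le
  refine ⟨Real.exp (2 * M * π) * π * Real.exp (2 * M * π), by positivity, fun l m hlm => ?_⟩
  have hcont (l : ℝ) : ContinuousOn (D.angle l) (Icc 0 π) := fun x hx =>
    (D.hasDerivWithinAt_angle l hx).continuousWithinAt
  have hd (x : ℝ) (hx : x ∈ Icc 0 π) :=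
    ((D.hasDerivWithinAt_angle m hx).sub (D.hasDerivWithinAt_angle l hx)).congr_deriv
      (add_sub_add_comm _ _ _ _ |>.trans (congrArg _ (im_mul_exp_sub_im_mul_exp _ _ _)))
  refine (pos_and_le_of_hasDerivWithinAt_linear Real.pi_pos (sub_pos.2 hlm) hd (by simp) ?_
    (B := 2 * M) fun x hx => ?_).imp_right fun h => h.trans_eq (by ring)
  · have hc : ContinuousOn D (Icc 0 π) := D.contDiffOn.continuousOn
    have hl := hcont l
    have hm := hcont m
    have hsinc := Real.continuous_sinc.comp_continuousOn (hm.sub hl)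
    have hexp : ContinuousOn (fun x => D x * cexp ((-(D.angle m x + D.angle l x) : ℝ) * I))
      (Icc 0 π) := hc.mul (by fun_prop)
    exact (hsinc.const_mul (-2)).mul (continuous_re.comp_continuousOn hexp)
  · rw [abs_mul, abs_mul, abs_neg, abs_two]
    calc _ ≤ 2 * 1 * ‖D x‖ := by
          gcongr
          · exact Real.abs_sinc_le_one _
          · exact (abs_re_le_norm _).trans_eq (norm_mul_exp_mul_I _ _)
      _ ≤ 2 * M := by rw [mul_one]; gcongr; exact hM x hx

end DiracPotential

/-! ### Sums over half-integers -/

section DecaySums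

open SummationFilter

/-- The decay weight `1 / (1 + |n|)` measuring the distance to the unperturbed problem. -/
noncomputable def decay (n : ℤ) : ℝ := 1 / (1 + |(n : ℝ)|)

theorem decay_pos (n : ℤ) : 0 < decay n := by rw [decay]; positivity

theorem decay_le_one (n : ℤ) : decay n ≤ 1 :=
  div_le_one_of_le₀ (by linarith [abs_nonneg (n : ℝ)]) (by positivity)

theorem tendsto_decay_cofinite : Tendsto decay cofinite (𝓝 0) := by
  have h : Tendsto (fun n : ℤ => 1 + |(n : ℝ)|) cofinite atTop :=
    tendsto_atTop_add_const_left _ _ (tendsto_norm_cocompact_atTop.comp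
      (Int.isClosedEmbedding_coe_real.tendsto_cocompact.mono_left (cocompact_eq_cofinite ℤ).ge))
  exact h.const_div_atTop 1

theorem summable_decay_rpow {s : ℝ} (hs : 1 < s) : Summable fun n => decay n ^ s := by
  refine ((Real.summable_one_div_int_add_rpow 0 s).2 hs).of_norm_bounded_eventually ?_
  filter_upwards [(finite_singleton (0 : ℤ)).compl_mem_cofinite] with n hn
  have hn' : 0 < |(n : ℝ)| := abs_pos.2 (by exact_mod_cast hn)
  rw [Real.norm_of_nonneg (Real.rpow_nonneg (decay_pos n).le s), add_zero, decay,
    Real.div_rpow zero_le_one (by positivity), Real.one_rpow]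
  gcongr
  linarith

theorem decay_mul_decay_sub_le (k n : ℤ) : decay n * decay (k - n) ≤
    decay k ^ (1 / 4 : ℝ) * (decay n ^ (3 / 2 : ℝ) + decay (k - n) ^ (3 / 2 : ℝ)) := by
  have hprod : decay n * decay (k - n) ≤ decay k := by
    rw [decay, decay, decay, div_mul_div_comm, one_mul]
    gcongr
    have htri : |(k : ℝ)| ≤ |(n : ℝ)| + |((k - n : ℤ) : ℝ)| := by
      simpa using abs_add_le (n : ℝ) ((k - n : ℤ) : ℝ)
    nlinarith [mul_nonneg (abs_nonneg (n : ℝ)) (abs_nonneg ((k - n : ℤ) : ℝ))]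
  set u := decay n
  set v := decay (k - n)
  have hu : 0 < u := decay_pos _
  have hv : 0 < v := decay_pos _
  have hk : 0 < decay k := decay_pos k
  have hsq {w : ℝ} (hw : 0 < w) : (w ^ (3 / 4 : ℝ)) ^ 2 = w ^ (3 / 2 : ℝ) := by
    rw [← Real.rpow_natCast, ← Real.rpow_mul hw.le]; norm_num
  calc u * v = (u * v) ^ (1 / 4 : ℝ) * (u * v) ^ (3 / 4 : ℝ) := by
        rw [← Real.rpow_add (by positivity)]; norm_num
    _ ≤ decay k ^ (1 / 4 : ℝ) * (u ^ (3 / 4 : ℝ) * v ^ (3 / 4 : ℝ)) := by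
        rw [Real.mul_rpow hu.le hv.le (z := 3 / 4)]; gcongr
    _ ≤ decay k ^ (1 / 4 : ℝ) * (u ^ (3 / 2 : ℝ) + v ^ (3 / 2 : ℝ)) := by
        have h := two_mul_le_add_sq (u ^ (3 / 4 : ℝ)) (v ^ (3 / 4 : ℝ))
        have h0 : 0 ≤ u ^ (3 / 4 : ℝ) * v ^ (3 / 4 : ℝ) := by positivity
        rw [hsq hu, hsq hv] at h
        gcongr
        linarith

theorem exists_summable_decay_mul_decay_sub : ∃ S, ∀ k : ℤ,
    Summable (fun n => decay n * decay (k - n)) ∧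
      ∑' n, decay n * decay (k - n) ≤ decay k ^ (1 / 4 : ℝ) * S := by
  have hs : Summable fun n => decay n ^ (3 / 2 : ℝ) := summable_decay_rpow (by norm_num)
  refine ⟨2 * ∑' n, decay n ^ (3 / 2 : ℝ), fun k => ?_⟩
  have hsub := (Equiv.subLeft k).hasSum_iff.2 hs.hasSum
  have hmaj := (hs.hasSum.add hsub).mul_left (decay k ^ (1 / 4 : ℝ))
  have hsum : Summable fun n => decay n * decay (k - n) := hmaj.summable.of_nonneg_of_le
    (fun n => (mul_pos (decay_pos _) (decay_pos _)).le) (decay_mul_decay_sub_le k)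
  exact ⟨hsum, (hsum.tsum_le_of_sum_le fun s => (Summable.sum_le_tsum s
    (fun n _ => (mul_pos (decay_pos _) (decay_pos _)).le) hsum).trans
      (hasSum_le (decay_mul_decay_sub_le k) hsum.hasSum hmaj)).trans_eq (by ring)⟩

theorem tendsto_tsum_zero_of_le_decay_mul_decay {C : ℝ} {r : ℕ → ℤ → ℝ}
    (hr : ∀ k n, |r k n| ≤ C * (decay n * decay (k - n))) :
    (∀ k, Summable (r k)) ∧ Tendsto (fun k => ∑' n, r k n) atTop (𝓝 0) := by
  obtain ⟨S, hS⟩ := exists_summable_decay_mul_decay_sub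
  refine ⟨fun k => ((hS k).1.mul_left C).of_norm_bounded (hr k), ?_⟩
  have hC : 0 ≤ C := nonneg_of_mul_nonneg_left ((abs_nonneg _).trans (hr 0 0))
    (mul_pos (decay_pos _) (decay_pos _))
  have hlim : Tendsto (fun k : ℕ => C * (decay k ^ (1 / 4 : ℝ) * S)) atTop (𝓝 0) := by
    have hd : Tendsto (fun k : ℕ => decay k) atTop (𝓝 0) := tendsto_decay_cofinite.comp
      (Nat.cofinite_eq_atTop ▸ Nat.cast_injective.tendsto_cofinite)
    simpa using ((hd.rpow_const (p := 1 / 4) (by norm_num)).mul_const S).const_mul C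
  refine squeeze_zero_norm (fun k => ?_) hlim
  refine (tsum_of_norm_bounded ((hS k).1.mul_left C).hasSum (hr k)).trans ?_
  rw [tsum_mul_left]
  exact mul_le_mul_of_nonneg_left (hS k).2 hC

theorem sum_Icc_neg_comp_neg (u : ℤ → ℝ) (N : ℤ) :
    ∑ n ∈ Finset.Icc (-N) N, u (-n) = ∑ n ∈ Finset.Icc (-N) N, u n :=
  Finset.sum_equiv (Equiv.neg ℤ) (fun n => by simp only [Finset.mem_Icc, Equiv.neg_apply]; lia)
    (fun n _ => by simp)

theorem hasSum_symmetricIcc_comp_neg {u : ℤ → ℝ} {s : ℝ} (hu : HasSum u s (symmetricIcc ℤ)) :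
    HasSum (fun n => u (-n)) s (symmetricIcc ℤ) :=
  hasSum_symmetricIcc_iff.2 ((hasSum_symmetricIcc_iff.1 hu).congr fun N =>
    (sum_Icc_neg_comp_neg u N).symm)

theorem exists_hasSum_symmetricIcc_of_summable_add_neg {u : ℤ → ℝ}
    (hu : Summable fun n => u n + u (-n)) : ∃ s, HasSum u s (symmetricIcc ℤ) := by
  refine ⟨(∑' n, (u n + u (-n))) / 2, ?_⟩
  have h := hasSum_symmetricIcc_iff.1 (hu.hasSum.mono_left LeAtTop.le_atTop)
  refine hasSum_symmetricIcc_iff.2 ((h.div_const 2).congr fun N => ?_)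
  rw [Finset.sum_add_distrib, sum_Icc_neg_comp_neg, add_self_div_two]

theorem half_le_abs_add_half (n : ℤ) : 1 / 2 ≤ |(n : ℝ) + 1 / 2| := by
  rcases le_or_gt 0 n with hn | hn
  · have : (0 : ℝ) ≤ n := by exact_mod_cast hn
    exact (by linarith : _ ≤ (n : ℝ) + 1 / 2).trans (le_abs_self _)
  · have : (n : ℝ) ≤ -1 := by exact_mod_cast (by lia : n ≤ -1)
    exact (by linarith : _ ≤ -((n : ℝ) + 1 / 2)).trans (neg_le_abs _)

theorem one_div_abs_add_half_le_decay (n : ℤ) : 1 / |(n : ℝ) + 1 / 2| ≤ 4 * decay n := by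
  have h2 := half_le_abs_add_half n
  have h : |(n : ℝ)| ≤ |(n : ℝ) + 1 / 2| + 1 / 2 := by
    have := abs_sub (n + 1 / 2 : ℝ) (1 / 2)
    rwa [add_sub_cancel_right, abs_of_pos (by norm_num : (0 : ℝ) < 1 / 2)] at this
  rw [decay, mul_one_div, div_le_div_iff₀ (by linarith) (by positivity)]
  linarith

theorem tendsto_div_half_sub_cofinite {e : ℤ → ℝ} (he : ∀ n, |e n| ≤ 1) :
    Tendsto (fun n => e n / (1 / 2 - n)) cofinite (𝓝 0) := by
  have h : Tendsto (fun n => 4 * decay (-n)) cofinite (𝓝 0) := by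
    simpa using (tendsto_decay_cofinite.comp neg_injective.tendsto_cofinite).const_mul 4
  refine squeeze_zero_norm (fun n => ?_) h
  rw [norm_div, Real.norm_eq_abs, Real.norm_eq_abs, sub_eq_neg_add]
  refine (div_le_div_of_nonneg_right (he n) (abs_nonneg _)).trans ?_
  simpa using one_div_abs_add_half_le_decay (-n)

theorem exists_hasSum_div_half_sub {e : ℤ → ℝ} (he : ∀ n, |e n| ≤ 1) (heven : ∀ n, e (-n) = e n) :
    ∃ q, HasSum (fun n => e n / (1 / 2 - n)) q (symmetricIcc ℤ) := by
  obtain ⟨S, hS⟩ := exists_summable_decay_mul_decay_sub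
  refine exists_hasSum_symmetricIcc_of_summable_add_neg
    (((hS 0).1.mul_left 16).of_norm_bounded fun n => ?_)
  have hpos := half_le_abs_add_half n
  have hneg := half_le_abs_add_half (-n)
  have hpos' : (n : ℝ) + 1 / 2 ≠ 0 := abs_pos.1 (by linarith)
  have hneg' : ((-n : ℤ) : ℝ) + 1 / 2 ≠ 0 := abs_pos.1 (by linarith)
  have hsplit : e n / (1 / 2 - n) + e (-n) / (1 / 2 - ((-n : ℤ) : ℝ)) =
      e n * (1 / (n + 1 / 2) * (1 / (((-n : ℤ) : ℝ) + 1 / 2))) := by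
    rw [heven, show (1 / 2 - n : ℝ) = ((-n : ℤ) : ℝ) + 1 / 2 by push_cast; ring,
      show (1 / 2 - ((-n : ℤ) : ℝ)) = n + 1 / 2 by push_cast; ring,
      div_add_div _ _ hneg' hpos', one_div_mul_one_div, mul_one_div]
    congr 1 <;> push_cast <;> ring
  rw [hsplit, norm_mul, norm_mul, norm_div, norm_div, norm_one, zero_sub]
  calc _ ≤ 1 * ((4 * decay n) * (4 * decay (-n))) := by
        have := (decay_pos n).le
        gcongr
        exacts [he n, one_div_abs_add_half_le_decay n, one_div_abs_add_half_le_decay (-n)]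
    _ = _ := by ring

theorem hasSum_one_div_half_sub :
    HasSum (fun n : ℤ => (1 : ℝ) / (1 / 2 - n)) 0 (symmetricIcc ℤ) := by
  obtain ⟨q, hq⟩ := exists_hasSum_div_half_sub (e := fun _ => 1) (by simp) (by simp)
  have hshift := (hasSum_symmetricIcc_comp_add_one
    (tendsto_div_half_sub_cofinite (e := fun _ => 1) (by simp))).2 hq
  have hodd : (fun n : ℤ => (1 : ℝ) / (1 / 2 - ((n + 1 : ℤ) : ℝ))) =
      fun n : ℤ => -(1 / (1 / 2 - ((-n : ℤ) : ℝ))) := by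
    funext n
    rw [← div_neg]
    push_cast
    ring_nf
  have hq0 : q = -q := hshift.unique (hodd ▸ (hasSum_symmetricIcc_comp_neg hq).neg)
  rwa [self_eq_neg.1 hq0] at hq

theorem hasSum_zpow_div_add_half_sub {ε : ℝ} (hε : |ε| = 1) {q : ℝ}
    (hq : HasSum (fun n : ℤ => ε ^ n / (1 / 2 - n)) q (symmetricIcc ℤ)) (k : ℤ) :
    HasSum (fun n : ℤ => ε ^ n / (k + 1 / 2 - n)) (ε ^ k * q) (symmetricIcc ℤ) := by
  have hε0 : ε ≠ 0 := abs_pos.1 (by simp [hε])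
  have h := (hasSum_symmetricIcc_comp_add (tendsto_div_half_sub_cofinite fun n => by
    rw [abs_zpow, hε, one_zpow]) hq (-k)).mul_left (ε ^ k)
  refine (funext fun n => ?_ : (fun n : ℤ => ε ^ n / (k + 1 / 2 - n)) = _) ▸ h
  rw [← mul_div_assoc, ← zpow_add₀ hε0, add_neg_cancel_comm_assoc]
  push_cast
  ring

theorem half_le_abs_add_half_sub (k n : ℤ) : 1 / 2 ≤ |(k : ℝ) + 1 / 2 - n| := by
  convert half_le_abs_add_half (k - n) using 2
  push_cast
  ring

theorem one_div_abs_add_half_sub_le_decay (k n : ℤ) :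
    1 / |(k : ℝ) + 1 / 2 - n| ≤ 4 * decay (k - n) := by
  convert one_div_abs_add_half_le_decay (k - n) using 3
  push_cast
  ring

theorem one_div_div_abs_add_half_sub_le_decay (k n : ℤ) :
    1 / (1 + |(k : ℝ) + 1 / 2|) / |(k : ℝ) + 1 / 2 - n| ≤ 3 * decay n := by
  have hhalf := half_le_abs_add_half_sub k n
  have htri : |(n : ℝ)| ≤ |(k : ℝ) + 1 / 2| + |(k : ℝ) + 1 / 2 - n| := by
    simpa using abs_sub ((k : ℝ) + 1 / 2) (k + 1 / 2 - n)
  rw [div_div, decay, mul_one_div, div_le_div_iff₀ (by positivity) (by positivity)]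
  nlinarith [abs_nonneg ((k : ℝ) + 1 / 2)]

theorem abs_sub_sub_div_le {L : ℝ → ℝ} {C : ℝ} (hC : 0 ≤ C)
    (hL : ∀ y, |L y - y| ≤ C / (1 + |y|)) (k n : ℤ) :
    |((k : ℝ) + 1 / 2 - n - (L (k + 1 / 2) - L n)) / ((k : ℝ) + 1 / 2 - n)| ≤
      5 * C * decay n := by
  have hhalf := half_le_abs_add_half_sub k n
  have hinv : 1 / |(k : ℝ) + 1 / 2 - n| ≤ 2 := by rw [div_le_iff₀ (by linarith)]; linarith
  have hpeetre := one_div_div_abs_add_half_sub_le_decay k n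
  set d : ℝ := k + 1 / 2 - n
  have hn := decay_pos n
  have hdiff : |d - (L (k + 1 / 2) - L n)| ≤ C / (1 + |(k : ℝ) + 1 / 2|) + C * decay n := by
    rw [show d - (L (k + 1 / 2) - L n) = -(L (k + 1 / 2) - (k + 1 / 2)) + (L n - n) by ring]
    refine (abs_add_le _ _).trans (add_le_add ((abs_neg _).trans_le (hL _)) ?_)
    rw [decay, mul_one_div]
    exact hL n
  calc |(d - (L (k + 1 / 2) - L n)) / d|
      ≤ (C / (1 + |(k : ℝ) + 1 / 2|) + C * decay n) / |d| := by rw [abs_div]; gcongr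
    _ = C * (1 / (1 + |(k : ℝ) + 1 / 2|) / |d|) + C * decay n * (1 / |d|) := by ring
    _ ≤ C * (3 * decay n) + C * decay n * 2 := by gcongr
    _ = 5 * C * decay n := by ring

theorem abs_div_sub_div_le {L : ℝ → ℝ} {C c : ℝ} (hc : 0 < c)
    (hL : ∀ y, |L y - y| ≤ C / (1 + |y|)) (hL' : ∀ y z, c * |y - z| ≤ |L y - L z|)
    {γ e : ℤ → ℝ} (he : ∀ n, |e n| ≤ 1) (hγ : ∀ n, |γ n - e n| ≤ C * decay n) (k n : ℤ) :
    |γ n / (L (k + 1 / 2) - L n) - e n / (k + 1 / 2 - n)| ≤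
      24 * C / c * (decay n * decay (k - n)) := by
  have hC : 0 ≤ C := nonneg_of_mul_nonneg_left ((abs_nonneg _).trans (hγ 0)) (decay_pos 0)
  have hdiff := abs_sub_sub_div_le hC hL k n
  have hinv := one_div_abs_add_half_sub_le_decay k n
  have hd : 0 < |(k : ℝ) + 1 / 2 - n| := by linarith [half_le_abs_add_half_sub k n]
  have hΔ : c * |(k : ℝ) + 1 / 2 - n| ≤ |L (k + 1 / 2) - L n| := hL' _ _
  set d : ℝ := k + 1 / 2 - n
  set Δ : ℝ := L (k + 1 / 2) - L n
  have hΔ0 : 0 < |Δ| := (mul_pos hc hd).trans_le hΔ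
  have hn := decay_pos n
  have hsplit : γ n / Δ - e n / d = (γ n - e n) / Δ + e n * ((d - Δ) / d) / Δ := by
    have := abs_pos.1 hd
    have := abs_pos.1 hΔ0
    field_simp
    ring
  calc |γ n / Δ - e n / d| ≤ C * decay n / |Δ| + 1 * (5 * C * decay n) / |Δ| := by
        rw [hsplit]
        refine (abs_add_le _ _).trans ?_
        rw [abs_div, abs_div, abs_mul]
        gcongr
        exacts [hγ n, he n]
    _ = 6 * C * decay n / |Δ| := by ring
    _ ≤ 6 * C * decay n / (c * |d|) := by gcongr
    _ = 6 * C / c * decay n * (1 / |d|) := by field_simp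
    _ ≤ 6 * C / c * decay n * (4 * decay (k - n)) := by gcongr
    _ = 24 * C / c * (decay n * decay (k - n)) := by ring

theorem exists_hasSum_div_sub_tendsto {L : ℝ → ℝ} {C c : ℝ} (hc : 0 < c)
    (hL : ∀ y, |L y - y| ≤ C / (1 + |y|)) (hL' : ∀ y z, c * |y - z| ≤ |L y - L z|)
    {ε : ℝ} (hε : |ε| = 1) {γ : ℤ → ℝ} (hγ : ∀ n, |γ n - ε ^ n| ≤ C * decay n) {q : ℝ}
    (hq : HasSum (fun n : ℤ => ε ^ n / (1 / 2 - n)) q (symmetricIcc ℤ)) :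
    ∃ s : ℕ → ℝ,
      (∀ k : ℕ, HasSum (fun n : ℤ => γ n / (L (k + 1 / 2) - L n)) (s k) (symmetricIcc ℤ)) ∧
        Tendsto (fun k => s k - ε ^ k * q) atTop (𝓝 0) := by
  set r : ℕ → ℤ → ℝ := fun k n => γ n / (L (k + 1 / 2) - L n) - ε ^ n / (k + 1 / 2 - n)
  obtain ⟨hr, hlim⟩ := tendsto_tsum_zero_of_le_decay_mul_decay (C := 24 * C / c) (r := r)
    fun k n => abs_div_sub_div_le hc hL hL' (fun n => by rw [abs_zpow, hε, one_zpow]) hγ k n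
  refine ⟨fun k => ε ^ k * q + ∑' n, r k n, fun k => ?_, by simpa using hlim⟩
  have h := (hasSum_zpow_div_add_half_sub hε hq k).add ((hr k).hasSum.mono_left LeAtTop.le_atTop)
  simpa [r] using h

end DecaySums

namespace DiracPotential

variable (D : DiracPotential)

theorem strictMono_angle_pi : StrictMono fun l => D.angle l π := fun l m hlm => by
  obtain ⟨K, -, hK⟩ := D.angle_pi_sub_bounds
  exact sub_pos.1 (hK l m hlm).1

theorem continuous_angle_pi : Continuous fun l => D.angle l π := by
  obtain ⟨K, hK0, hK⟩ := D.angle_pi_sub_bounds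
  refine (LipschitzWith.of_le_add_mul ⟨K, hK0.le⟩ fun l m => ?_).continuous
  rcases lt_or_ge m l with hml | hlm
  · have h := (hK m l hml).2
    rw [Real.dist_eq, abs_of_pos (sub_pos.2 hml)]
    exact sub_le_iff_le_add'.1 h
  · have h := D.strictMono_angle_pi.monotone hlm
    have : 0 ≤ K * dist l m := by positivity
    exact h.trans (le_add_of_nonneg_right this)

theorem surjective_angle_pi : Function.Surjective fun l => D.angle l π := by
  obtain ⟨C, hC0, hC⟩ := D.exists_norm_phase_le
  have hW (l : ℝ) : |(D.phase l π).im| ≤ C := (abs_im_le_norm _).trans <|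
    (hC l π (right_mem_Icc.2 Real.pi_nonneg)).trans
      (div_le_self hC0 (by linarith [abs_nonneg l]))
  refine D.continuous_angle_pi.surjective ?_ ?_
  · exact tendsto_atTop_add_right_of_le _ (-C) (tendsto_id.atTop_mul_const Real.pi_pos)
      fun l => (abs_le.1 (hW l)).1
  · exact tendsto_atBot_add_right_of_ge _ C (tendsto_id.atBot_mul_const Real.pi_pos)
      fun l => (abs_le.1 (hW l)).2

/-- The spectral parameter whose Prüfer angle at `π` equals `πy`; its values at the integers are
the eigenvalues, and its values at the half-integers serve as test parameters between them. -/
noncomputable def level (y : ℝ) : ℝ := (D.surjective_angle_pi (π * y)).choose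

@[simp] theorem angle_level_pi (y : ℝ) : D.angle (D.level y) π = π * y :=
  (D.surjective_angle_pi (π * y)).choose_spec

theorem level_eq_of_angle_pi_eq {l y : ℝ} (h : D.angle l π = π * y) : D.level y = l :=
  D.strictMono_angle_pi.injective (by simpa using h.symm)

theorem strictMono_level : StrictMono D.level := fun y z hyz => by
  rw [← D.strictMono_angle_pi.lt_iff_lt]
  simpa using mul_lt_mul_of_pos_left hyz Real.pi_pos

theorem exists_mul_abs_sub_le_abs_level_sub :
    ∃ c, 0 < c ∧ ∀ y z, c * |y - z| ≤ |D.level y - D.level z| := by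
  obtain ⟨K, hK0, hK⟩ := D.angle_pi_sub_bounds
  have hlt (y z : ℝ) (h : z < y) : π / K * |y - z| ≤ |D.level y - D.level z| := by
    have hlevel := D.strictMono_level h
    have := (hK _ _ hlevel).2
    rw [angle_level_pi, angle_level_pi, ← mul_sub] at this
    rwa [abs_of_pos (sub_pos.2 h), abs_of_pos (sub_pos.2 hlevel), div_mul_eq_mul_div,
      div_le_iff₀' hK0]
  refine ⟨π / K, by positivity, fun y z => ?_⟩
  rcases lt_trichotomy y z with h | rfl | h
  · rw [abs_sub_comm, abs_sub_comm (D.level y)]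
    exact hlt z y h
  · simp
  · exact hlt y z h

theorem exists_norm_phase_level_le : ∃ C, 0 ≤ C ∧ ∀ y : ℝ, |D.level y - y| ≤ C / (1 + |y|) ∧
    ∀ x ∈ Icc 0 π, ‖D.phase (D.level y) x‖ ≤ C / (1 + |y|) := by
  obtain ⟨C, hC0, hC⟩ := D.exists_norm_phase_le
  have hpi : (π : ℝ) ∈ Icc 0 π := right_mem_Icc.2 Real.pi_nonneg
  have hclose (y : ℝ) : |D.level y - y| ≤ ‖D.phase (D.level y) π‖ := by
    have h : π * (D.level y - y) = -(D.phase (D.level y) π).im := by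
      have := D.angle_level_pi y
      rw [angle] at this
      linarith
    have habs := congrArg abs h
    rw [abs_mul, abs_of_pos Real.pi_pos, abs_neg] at habs
    nlinarith [abs_im_le_norm (D.phase (D.level y) π), abs_nonneg (D.level y - y),
      Real.pi_gt_three]
  have hcompare (y : ℝ) : 1 + |y| ≤ (1 + C) * (1 + |D.level y|) := by
    have h1 : |D.level y - y| ≤ C := (hclose y).trans ((hC _ π hpi).trans
      (div_le_self hC0 (by linarith [abs_nonneg (D.level y)])))
    have h2 := abs_sub_abs_le_abs_sub y (D.level y)
    rw [abs_sub_comm] at h2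
    nlinarith [mul_nonneg hC0 (abs_nonneg (D.level y))]
  have hphase (y x : ℝ) (hx : x ∈ Icc 0 π) :
      ‖D.phase (D.level y) x‖ ≤ C * (1 + C) / (1 + |y|) := by
    refine (hC _ x hx).trans ?_
    rw [div_le_div_iff₀ (by positivity) (by positivity), mul_assoc]
    exact mul_le_mul_of_nonneg_left (hcompare y) hC0
  exact ⟨C * (1 + C), by positivity, fun y => ⟨(hclose y).trans (hphase y π hpi), hphase y⟩⟩

theorem exists_norm_sol_level_sub_exp_le : ∃ C, 0 ≤ C ∧ ∀ y : ℝ, ∀ x ∈ Icc 0 π,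
    ‖D.sol (D.level y) x - cexp ((y * x : ℝ) * I)‖ ≤ C / (1 + |y|) := by
  obtain ⟨C, hC0, hC⟩ := D.exists_norm_phase_level_le
  refine ⟨Real.exp (C * π + C) * (C * π + C), by positivity, fun y x hx => ?_⟩
  set z : ℂ := ((D.level y - y) * x : ℝ) * I + D.phase (D.level y) x
  have hz : ‖z‖ ≤ (C * π + C) / (1 + |y|) := by
    rw [add_div, ← div_mul_eq_mul_div]
    refine norm_add_le_of_le ?_ ((hC y).2 x hx)
    rw [norm_mul, norm_I, mul_one, norm_real, Real.norm_eq_abs, abs_mul, abs_of_nonneg hx.1]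
    exact mul_le_mul (hC y).1 hx.2 hx.1 (by positivity)
  have hz' : ‖z‖ ≤ C * π + C := hz.trans
    (div_le_self (by positivity) (by linarith [abs_nonneg y]))
  have hsol : D.sol (D.level y) x - cexp ((y * x : ℝ) * I) =
      (cexp z - 1) * cexp ((y * x : ℝ) * I) := by
    rw [sub_mul, one_mul, ← Complex.exp_add, sol_eq_exp]
    congr 2
    simp only [z]
    push_cast
    ring
  rw [hsol, norm_mul_exp_mul_I, mul_div_assoc]
  exact (norm_exp_sub_one_le_mul_of_norm_le hz').trans (by gcongr)

theorem sol_level_pi (y : ℝ) : D.sol (D.level y) π =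
    Real.exp (D.phase (D.level y) π).re * cexp ((y * π : ℝ) * I) := by
  rw [sol, angle_level_pi, mul_comm π y]

end DiracPotential

/-! ### Quadratically close bases and half-range Fourier series -/

section QuadraticallyCloseBasis

open scoped InnerProductSpace

variable {ι H : Type*} [NormedAddCommGroup H] [InnerProductSpace ℝ H] (b : HilbertBasis ι ℝ H)
  {v : ι → H} {S : Finset ι} {x : H}

theorem eq_zero_of_inner_eq_zero_of_tsum_norm_sub_sq_lt_one
    (hsum : Summable fun i => ‖v i - b i‖ ^ 2)
    (hlt : ∑' i : {i // i ∉ S}, ‖v i - b i‖ ^ 2 < 1) (hb : ∀ i ∈ S, ⟪x, b i⟫_ℝ = 0)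
    (hv : ∀ i ∉ S, ⟪x, v i⟫_ℝ = 0) : x = 0 := by
  by_contra hx
  have hx2 : 0 < ‖x‖ ^ 2 := by positivity
  have hle (i : ι) : ⟪x, b i⟫_ℝ * ⟪b i, x⟫_ℝ ≤
      {i | i ∉ S}.indicator (fun i => ‖v i - b i‖ ^ 2) i * ‖x‖ ^ 2 := by
    by_cases hi : i ∈ S
    · simp [hi, hb i hi]
    · have hsub : |⟪x, b i⟫_ℝ| ≤ ‖x‖ * ‖v i - b i‖ := by
        simpa [inner_sub_right, hv i hi] using abs_real_inner_le_norm x (v i - b i)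
      have hsq := pow_le_pow_left₀ (abs_nonneg _) hsub 2
      rw [sq_abs, mul_pow] at hsq
      rw [real_inner_comm x (b i), indicator_of_mem (by exact hi), ← sq, mul_comm]
      exact hsq
  have hpars := hasSum_le hle (b.hasSum_inner_mul_inner x x) ((hsum.indicator _).hasSum.mul_right _)
  rw [real_inner_self_eq_norm_sq, ← tsum_subtype {i | i ∉ S} fun i => ‖v i - b i‖ ^ 2] at hpars
  exact hpars.not_gt (mul_lt_of_lt_one_left hx2 hlt)

theorem exists_ne_zero_mem_span_forall_inner_eq_zero {κ : Type*} [Finite κ] {w : Option κ → H}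
    (hw : LinearIndependent ℝ w) (e : κ → H) :
    ∃ x ∈ Submodule.span ℝ (range w), x ≠ 0 ∧ ∀ i, ⟪x, e i⟫_ℝ = 0 := by
  have := Fintype.ofFinite κ
  let T : (Option κ → ℝ) →ₗ[ℝ] κ → ℝ :=
    LinearMap.pi fun i => (innerₛₗ ℝ (e i)).comp (Fintype.linearCombination ℝ w)
  obtain ⟨c, hc, hc0⟩ := Submodule.exists_mem_ne_zero_of_ne_bot
    (LinearMap.ker_ne_bot_of_finrank_lt (f := T) (by simp))
  refine ⟨Fintype.linearCombination ℝ w c, ?_, fun h => hc0 ?_, fun i => ?_⟩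
  · rw [← Fintype.range_linearCombination]
    exact LinearMap.mem_range_self _ c
  · exact funext (Fintype.linearIndependent_iff.1 hw c h)
  · rw [real_inner_comm]
    exact congrFun hc i

theorem eq_zero_of_inner_eq_zero_of_summable_norm_sub_sq (hne : ∀ i, v i ≠ 0)
    (horth : Pairwise fun i j => ⟪v i, v j⟫_ℝ = 0) (hsum : Summable fun i => ‖v i - b i‖ ^ 2)
    (hv : ∀ i, ⟪x, v i⟫_ℝ = 0) : x = 0 := by
  by_contra hx
  obtain ⟨S, hS⟩ : ∃ S : Finset ι, ∑' i : {i // i ∉ S}, ‖v i - b i‖ ^ 2 < 1 :=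
    ((tendsto_order.1 (tendsto_tsum_compl_atTop_zero fun i => ‖v i - b i‖ ^ 2)).2 1 one_pos).exists
  let w : Option S → H := fun o => o.elim x fun i => v i
  have hw : LinearIndependent ℝ w := by
    refine linearIndependent_of_ne_zero_of_inner_eq_zero ?_ ?_
    · rintro (_ | i)
      exacts [hx, hne i]
    · rintro (_ | i) (_ | j) hij
      · exact absurd rfl hij
      · exact hv j
      · exact (real_inner_comm _ _).trans (hv i)
      · exact horth fun h => hij (by rw [Subtype.ext h])
  -- A combination of the `|S| + 1` vectors `w` solves the `|S|` equations `⟪y, b i⟫ = 0`.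
  obtain ⟨y, hyw, hy, hyb⟩ := exists_ne_zero_mem_span_forall_inner_eq_zero hw fun i : S => b i
  refine hy (eq_zero_of_inner_eq_zero_of_tsum_norm_sub_sq_lt_one b hsum hS
    (fun i hi => hyb ⟨i, hi⟩) fun i hi => ?_)
  have hspan : Submodule.span ℝ (range w) ≤ LinearMap.ker (innerₛₗ ℝ (v i)) := by
    rw [Submodule.span_le]
    rintro _ ⟨_ | j, rfl⟩
    · exact (real_inner_comm _ _).trans (hv i)
    · exact horth fun h => hi (h ▸ j.2)
  exact (real_inner_comm _ _).trans (hspan hyw)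

theorem hasSum_inner_mul_inner_div_of_summable_norm_sub_sq [CompleteSpace H] (hne : ∀ i, v i ≠ 0)
    (horth : Pairwise fun i j => ⟪v i, v j⟫_ℝ = 0) (hsum : Summable fun i => ‖v i - b i‖ ^ 2)
    (x y : H) : HasSum (fun i => ⟪x, v i⟫_ℝ * ⟪v i, y⟫_ℝ / ‖v i‖ ^ 2) ⟪x, y⟫_ℝ := by
  have hon : Orthonormal ℝ fun i => ‖v i‖⁻¹ • v i := by
    refine ⟨fun i => norm_smul_inv_norm (hne i), fun i j hij => ?_⟩
    change ⟪‖v i‖⁻¹ • v i, ‖v j‖⁻¹ • v j⟫_ℝ = 0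
    rw [real_inner_smul_left, real_inner_smul_right, horth hij, mul_zero, mul_zero]
  have htotal : (Submodule.span ℝ (range fun i => ‖v i‖⁻¹ • v i))ᗮ = ⊥ := by
    refine (Submodule.eq_bot_iff _).2 fun z hz => ?_
    refine eq_zero_of_inner_eq_zero_of_summable_norm_sub_sq b hne horth hsum fun i => ?_
    have h := (Submodule.mem_orthogonal' _ _).1 hz _ (Submodule.subset_span (mem_range_self i))
    rw [real_inner_smul_right] at h
    exact (mul_eq_zero.1 h).resolve_left (inv_ne_zero (norm_ne_zero_iff.2 (hne i)))
  have hterm (i : ι) : ⟪x, ‖v i‖⁻¹ • v i⟫_ℝ * ⟪‖v i‖⁻¹ • v i, y⟫_ℝ =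
      ⟪x, v i⟫_ℝ * ⟪v i, y⟫_ℝ / ‖v i‖ ^ 2 := by
    rw [real_inner_smul_left, real_inner_smul_right]
    ring
  simpa only [HilbertBasis.coe_mkOfOrthogonalEqBot, hterm] using
    (HilbertBasis.mkOfOrthogonalEqBot hon htotal).hasSum_inner_mul_inner x y

end QuadraticallyCloseBasis

section HalfRangeFourier

theorem intervalIntegral_neg_self_eq_two_mul_integral_re {c : ℝ} (hc : 0 ≤ c) {g : ℝ → ℂ}
    (hg : IntervalIntegrable g volume 0 c) (hconj : ∀ x ∈ Ioc 0 c, g (-x) = conj (g x)) :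
    ∫ x in -c..c, g x = ((2 * ∫ x in 0..c, (g x).re : ℝ) : ℂ) := by
  have hcongr : EqOn (fun x => g (-x)) (fun x => conj (g x)) (uIoc 0 c) := fun x hx =>
    hconj x (by rwa [uIoc_of_le hc] at hx)
  have hneg : IntervalIntegrable g volume (-c) 0 := by
    have hg' : IntervalIntegrable (fun x => conj (g x)) volume 0 c :=
      ⟨conjCLE.toContinuousLinearMap.integrable_comp hg.1,
        conjCLE.toContinuousLinearMap.integrable_comp hg.2⟩
    simpa using (IntervalIntegrable.comp_sub_left
      ((intervalIntegrable_congr hcongr).2 hg' : IntervalIntegrable _ _ _ _) 0).symm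
  have hleft : ∫ x in -c..0, g x = conj (∫ x in 0..c, g x) := by
    have h := intervalIntegral.integral_comp_neg (a := 0) (b := c) g
    rw [neg_zero] at h
    rw [← h, ← intervalIntegral.intervalIntegral_conj]
    exact intervalIntegral.integral_congr_ae (ae_of_all _ hcongr)
  rw [← intervalIntegral.integral_add_adjacent_intervals hneg hg, hleft, add_comm, add_conj,
    ← reCLM_apply, ← reCLM.intervalIntegral_comp_comm hg]
  rfl

/-- The extension of a function on `[0, ∞)` to `ℝ` satisfying `U (-x) = conj (U x)`; it turns
the real-linear Fourier analysis on `[0, π]` into the complex one on `[-π, π]`. -/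
noncomputable def hermitianExtension (u : ℝ → ℂ) : ℝ → ℂ :=
  (Ioi 0).piecewise u fun x => conj (u (-x))

theorem hermitianExtension_of_pos {u : ℝ → ℂ} {x : ℝ} (hx : 0 < x) :
    hermitianExtension u x = u x :=
  piecewise_eq_of_mem _ _ _ hx

theorem hermitianExtension_neg_of_pos {u : ℝ → ℂ} {x : ℝ} (hx : 0 < x) :
    hermitianExtension u (-x) = conj (u x) := by
  rw [hermitianExtension, piecewise_eq_of_notMem _ _ _ (by simpa using hx.le), neg_neg]

theorem memLp_hermitianExtension {u : ℝ → ℂ} {c : ℝ} (hu : ContinuousOn u (Icc 0 c)) :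
    MemLp (hermitianExtension u) 2 (volume.restrict (Ioc (-c) c)) := by
  have hmem {f : ℝ → ℂ} {s t : ℝ} (hf : ContinuousOn f (Icc s t)) :
      MemLp f 2 (volume.restrict (Icc s t)) := by
    obtain ⟨M, hM⟩ := isCompact_Icc.exists_bound_of_continuousOn hf
    exact MemLp.of_bound (hf.aestronglyMeasurable measurableSet_Icc) M
      (ae_restrict_of_forall_mem measurableSet_Icc hM)
  have hconj : ContinuousOn (fun x => conj (u (-x))) (Icc (-c) 0) :=
    continuous_conj.comp_continuousOn (hu.comp continuousOn_neg fun x hx =>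
      ⟨neg_nonneg.2 hx.2, neg_le.1 hx.1⟩)
  refine MemLp.piecewise measurableSet_Ioi ?_ ?_
  · have hsub : Ioi 0 ∩ Ioc (-c) c ⊆ Icc 0 c := fun x hx => ⟨(mem_Ioi.1 hx.1).le, hx.2.2⟩
    rw [Measure.restrict_restrict measurableSet_Ioi]
    exact (hmem hu).mono_measure (Measure.restrict_mono hsub le_rfl)
  · have hsub : (Ioi 0)ᶜ ∩ Ioc (-c) c ⊆ Icc (-c) 0 := fun x hx => ⟨hx.2.1.le, not_lt.1 hx.1⟩
    rw [Measure.restrict_restrict measurableSet_Ioi.compl]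
    exact (hmem hconj).mono_measure (Measure.restrict_mono hsub le_rfl)

/-- The real inner product of `L²([0, π], ℂ)`. -/
noncomputable def pairing (u v : ℝ → ℂ) : ℝ := ∫ x in 0..π, (u x * conj (v x)).re

/-- The Fourier modes `exp (inx)`, an orthogonal basis of `L²([0, π], ℂ)` over the reals. -/
noncomputable def mode (n : ℤ) (x : ℝ) : ℂ := cexp ((n * x : ℝ) * I)

theorem continuous_mode (n : ℤ) : Continuous (mode n) := by
  unfold mode
  fun_prop

theorem conj_mode (n : ℤ) (x : ℝ) : conj (mode n x) = mode n (-x) := by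
  simp [mode, ← exp_conj]

theorem norm_mode (n : ℤ) (x : ℝ) : ‖mode n x‖ = 1 := norm_exp_ofReal_mul_I _

theorem mode_pi (n : ℤ) : mode n π = ((-1) ^ n : ℝ) := by
  rw [mode, ← Real.cos_int_mul_pi]
  refine Complex.ext (exp_ofReal_mul_I_re _) ?_
  rw [exp_ofReal_mul_I_im, Real.sin_int_mul_pi, ofReal_im]

theorem fourierCoeffOn_hermitianExtension {u : ℝ → ℂ} (hu : ContinuousOn u (Icc 0 π)) (n : ℤ) :
    fourierCoeffOn (neg_lt_self Real.pi_pos) (hermitianExtension u) n =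
      (pairing u (mode n) / π : ℝ) := by
  have hfourier (x : ℝ) : fourier (-n) (x : AddCircle (π - -π)) = mode n (-x) := by
    rw [fourier_coe_apply, mode]
    congr 1
    push_cast
    field_simp
    ring
  have hright : EqOn (fun x => mode n (-x) • hermitianExtension u x)
      (fun x => u x * conj (mode n x)) (Ioc 0 π) := fun x hx => by
    beta_reduce
    rw [hermitianExtension_of_pos hx.1, conj_mode, smul_eq_mul, mul_comm]
  have hInt : IntervalIntegrable (fun x => u x * conj (mode n x)) volume 0 π :=
    (hu.mul (continuous_conj.comp (continuous_mode n)).continuousOn).intervalIntegrable_of_Icc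
      Real.pi_nonneg
  rw [← uIoc_of_le Real.pi_nonneg] at hright
  rw [fourierCoeffOn_eq_integral]
  simp only [hfourier]
  rw [intervalIntegral_neg_self_eq_two_mul_integral_re Real.pi_nonneg
    ((intervalIntegrable_congr hright).2 hInt) fun x hx => ?_]
  · rw [pairing, intervalIntegral.integral_congr_ae
      (ae_of_all _ fun x hx => congrArg re (hright hx)), real_smul, ← ofReal_mul]
    congr 1
    ring
  · rw [hermitianExtension_neg_of_pos hx.1, hermitianExtension_of_pos hx.1, smul_eq_mul,
      smul_eq_mul, map_mul, conj_mode]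

theorem re_mul_conj_self (z : ℂ) : (z * conj z).re = ‖z‖ ^ 2 := by
  rw [mul_conj, normSq_eq_norm_sq, ofReal_re]

theorem integral_norm_hermitianExtension_sq {u : ℝ → ℂ} (hu : ContinuousOn u (Icc 0 π)) :
    ∫ x in -π..π, ‖hermitianExtension u x‖ ^ 2 = 2 * pairing u u := by
  have hright : EqOn (fun x => (‖hermitianExtension u x‖ ^ 2 : ℂ)) (fun x => u x * conj (u x))
      (uIoc 0 π) := fun x hx => by
    rw [uIoc_of_le Real.pi_nonneg] at hx
    beta_reduce
    rw [hermitianExtension_of_pos hx.1, mul_conj']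
  have hInt : IntervalIntegrable (fun x => u x * conj (u x)) volume 0 π :=
    (hu.mul (continuous_conj.comp_continuousOn hu)).intervalIntegrable_of_Icc Real.pi_nonneg
  rw [← ofReal_inj, ← intervalIntegral.integral_ofReal]
  simp only [ofReal_pow]
  rw [intervalIntegral_neg_self_eq_two_mul_integral_re Real.pi_nonneg
    ((intervalIntegrable_congr hright).2 hInt) fun x hx => ?_]
  · rw [pairing, intervalIntegral.integral_congr_ae
      (ae_of_all _ fun x hx => congrArg re (hright hx))]
  · simp only [hermitianExtension_neg_of_pos hx.1, hermitianExtension_of_pos hx.1, norm_conj,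
      map_pow, conj_ofReal]

theorem hasSum_pairing_mode_sq {u : ℝ → ℂ} (hu : ContinuousOn u (Icc 0 π)) :
    HasSum (fun n => pairing u (mode n) ^ 2) (π * pairing u u) := by
  have h := (hasSum_sq_fourierCoeffOn (neg_lt_self Real.pi_pos)
    (memLp_hermitianExtension hu)).mul_left (π ^ 2)
  simp only [fourierCoeffOn_hermitianExtension hu, norm_real, Real.norm_eq_abs, sq_abs, div_pow,
    integral_norm_hermitianExtension_sq hu, smul_eq_mul] at h
  have hsum : π ^ 2 * ((π - -π)⁻¹ * (2 * pairing u u)) = π * pairing u u := by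
    field_simp
    ring
  have hpi : π ^ 2 ≠ 0 := by positivity
  simpa only [hsum, mul_div_cancel₀ _ hpi] using h

theorem pairing_mode_mode (m n : ℤ) : pairing (mode m) (mode n) = if m = n then π else 0 := by
  have hcos (x : ℝ) : (mode m x * conj (mode n x)).re = Real.cos ((m - n : ℤ) * x) := by
    rw [conj_mode, mode, mode, ← Complex.exp_add, ← add_mul, ← ofReal_add, exp_ofReal_mul_I_re]
    push_cast
    ring_nf
  simp only [pairing, hcos]
  split_ifs with h
  · simp [h]
  · have hne : ((m - n : ℤ) : ℝ) ≠ 0 := Int.cast_ne_zero.2 (sub_ne_zero.2 h)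
    rw [intervalIntegral.integral_comp_mul_left (fun x => Real.cos x) hne, integral_cos,
      Real.sin_int_mul_pi]
    simp

theorem pairing_comm (u v : ℝ → ℂ) : pairing u v = pairing v u := by
  simp only [pairing, mul_re, conj_re, conj_im, mul_neg, mul_comm]

theorem pairing_sub_left {u v w : ℝ → ℂ} (hu : ContinuousOn u (Icc 0 π))
    (hv : ContinuousOn v (Icc 0 π)) (hw : ContinuousOn w (Icc 0 π)) :
    pairing (u - v) w = pairing u w - pairing v w := by
  have hI {f : ℝ → ℂ} (hf : ContinuousOn f (Icc 0 π)) :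
      IntervalIntegrable (fun x => (f x * conj (w x)).re) volume 0 π :=
    (continuous_re.comp_continuousOn (hf.mul (continuous_conj.comp_continuousOn hw))
      ).intervalIntegrable_of_Icc Real.pi_nonneg
  simp only [pairing, ← intervalIntegral.integral_sub (hI hu) (hI hv), Pi.sub_apply, sub_mul,
    sub_re]

theorem pairing_sub_self {u v : ℝ → ℂ} (hu : ContinuousOn u (Icc 0 π))
    (hv : ContinuousOn v (Icc 0 π)) :
    pairing (u - v) (u - v) = pairing u u + pairing v v - 2 * pairing u v := by
  rw [pairing_sub_left hu hv (hu.sub hv), pairing_comm u, pairing_comm v,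
    pairing_sub_left hu hv hu, pairing_sub_left hu hv hv, pairing_comm v u]
  ring

end HalfRangeFourier

section HalfRangeCoefficients

open scoped InnerProductSpace lp

variable {u v : ℝ → ℂ}

/-- The normalized Fourier coefficients of a continuous function on `[0, π]` with respect to
`mode`, as an element of `ℓ²(ℤ)`. -/
noncomputable def modeCoeff (hu : ContinuousOn u (Icc 0 π)) : ℓ²(ℤ, ℝ) :=
  ⟨fun n => pairing u (mode n) / √π, memℓp_gen <| by
    simpa [div_pow, Real.sq_sqrt Real.pi_nonneg] using
      (hasSum_pairing_mode_sq hu).summable.div_const π⟩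

theorem norm_modeCoeff_sq (hu : ContinuousOn u (Icc 0 π)) :
    ‖modeCoeff hu‖ ^ 2 = pairing u u := by
  have h := lp.hasSum_inner (𝕜 := ℝ) (modeCoeff hu) (modeCoeff hu)
  have hterm (n : ℤ) : ⟪modeCoeff hu n, modeCoeff hu n⟫_ℝ = pairing u (mode n) ^ 2 / π := by
    rw [real_inner_self_eq_norm_sq, Real.norm_eq_abs, sq_abs]
    change (pairing u (mode n) / √π) ^ 2 = _
    rw [div_pow, Real.sq_sqrt Real.pi_nonneg]
  simp only [hterm] at h
  rw [← real_inner_self_eq_norm_sq, h.unique ((hasSum_pairing_mode_sq hu).div_const π),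
    mul_div_cancel_left₀ _ Real.pi_ne_zero]

theorem modeCoeff_sub (hu : ContinuousOn u (Icc 0 π)) (hv : ContinuousOn v (Icc 0 π)) :
    modeCoeff (hu.sub hv) = modeCoeff hu - modeCoeff hv := by
  ext n
  change pairing (u - v) (mode n) / √π = pairing u (mode n) / √π - pairing v (mode n) / √π
  rw [pairing_sub_left hu hv (continuous_mode n).continuousOn, sub_div]

theorem inner_modeCoeff (hu : ContinuousOn u (Icc 0 π)) (hv : ContinuousOn v (Icc 0 π)) :
    ⟪modeCoeff hu, modeCoeff hv⟫_ℝ = pairing u v := by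
  rw [real_inner_eq_norm_mul_self_add_norm_mul_self_sub_norm_sub_mul_self_div_two, ← sq, ← sq,
    ← sq, ← modeCoeff_sub, norm_modeCoeff_sq, norm_modeCoeff_sq, norm_modeCoeff_sq,
    pairing_sub_self hu hv]
  ring

theorem modeCoeff_mode (n : ℤ) :
    modeCoeff (continuous_mode n).continuousOn = √π • lp.single (E := fun _ : ℤ => ℝ) 2 n 1 := by
  ext m
  change pairing (mode n) (mode m) / √π = √π * lp.single (E := fun _ : ℤ => ℝ) 2 n 1 m
  rw [pairing_mode_mode, lp.single_apply]
  rcases eq_or_ne n m with rfl | h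
  · simp
  · simp [h, h.symm]

theorem hasSum_pairing_mul_pairing_div {Z : ℤ → ℝ → ℂ} (hZ : ∀ n, ContinuousOn (Z n) (Icc 0 π))
    (hne : ∀ n, pairing (Z n) (Z n) ≠ 0) (horth : Pairwise fun m n => pairing (Z m) (Z n) = 0)
    (hsum : Summable fun n => pairing (Z n - mode n) (Z n - mode n))
    (hu : ContinuousOn u (Icc 0 π)) (hv : ContinuousOn v (Icc 0 π)) :
    HasSum (fun n => pairing u (Z n) * pairing (Z n) v / pairing (Z n) (Z n)) (pairing u v) := by
  have hpi : 0 < √π := Real.sqrt_pos.2 Real.pi_pos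
  let b : HilbertBasis ℤ ℝ ℓ²(ℤ, ℝ) := .ofRepr (.refl ℝ _)
  have hb (n : ℤ) : modeCoeff (continuous_mode n).continuousOn = √π • b n := by
    rw [modeCoeff_mode, ← b.repr_symm_single]
    rfl
  have hclose (n : ℤ) : ‖(√π)⁻¹ • modeCoeff (hZ n) - b n‖ ^ 2 =
      pairing (Z n - mode n) (Z n - mode n) / π := by
    rw [← inv_smul_smul₀ hpi.ne' (b n), ← hb, ← smul_sub, ← modeCoeff_sub, norm_smul, mul_pow,
      norm_modeCoeff_sq, norm_inv, Real.norm_of_nonneg hpi.le, inv_pow,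
      Real.sq_sqrt Real.pi_nonneg, inv_mul_eq_div]
  have hinner (m n : ℤ) : ⟪(√π)⁻¹ • modeCoeff (hZ m), (√π)⁻¹ • modeCoeff (hZ n)⟫_ℝ =
      pairing (Z m) (Z n) / π := by
    rw [real_inner_smul_left, real_inner_smul_right, inner_modeCoeff, ← mul_assoc, ← mul_inv,
      Real.mul_self_sqrt Real.pi_nonneg, inv_mul_eq_div]
  have h := hasSum_inner_mul_inner_div_of_summable_norm_sub_sq b
    (v := fun n => (√π)⁻¹ • modeCoeff (hZ n))
    (fun n h => hne n ((div_eq_zero_iff.1 (by simpa [h] using (hinner n n).symm)).resolve_right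
      Real.pi_ne_zero))
    (fun m n hmn => (hinner m n).trans (by rw [horth hmn, zero_div]))
    (by simpa only [hclose] using hsum.div_const π) (modeCoeff hu) (modeCoeff hv)
  have hterm (n : ℤ) : ⟪modeCoeff hu, (√π)⁻¹ • modeCoeff (hZ n)⟫_ℝ *
      ⟪(√π)⁻¹ • modeCoeff (hZ n), modeCoeff hv⟫_ℝ / ‖(√π)⁻¹ • modeCoeff (hZ n)‖ ^ 2 =
      pairing u (Z n) * pairing (Z n) v / pairing (Z n) (Z n) := by
    rw [← real_inner_self_eq_norm_sq, hinner, real_inner_smul_left, real_inner_smul_right,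
      inner_modeCoeff, inner_modeCoeff]
    field_simp
    rw [Real.sq_sqrt Real.pi_nonneg]
    ring
  simpa only [hterm, inner_modeCoeff] using h

end HalfRangeCoefficients

section Pairing

theorem pairing_self_eq_integral (u : ℝ → ℂ) : pairing u u = ∫ x in 0..π, ‖u x‖ ^ 2 := by
  simp only [pairing, re_mul_conj_self]

theorem abs_pairing_self_sub_mul_pi_le {u : ℝ → ℂ} (hu : ContinuousOn u (Icc 0 π)) {c B : ℝ}
    (h : ∀ x ∈ Icc 0 π, |‖u x‖ ^ 2 - c| ≤ B) : |pairing u u - c * π| ≤ B * π := by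
  have hInt : IntervalIntegrable (fun x => ‖u x‖ ^ 2) volume 0 π :=
    (hu.norm.pow 2).intervalIntegrable_of_Icc Real.pi_nonneg
  have hsub : pairing u u - c * π = ∫ x in 0..π, (‖u x‖ ^ 2 - c) := by
    rw [intervalIntegral.integral_sub hInt intervalIntegrable_const,
      pairing_self_eq_integral, intervalIntegral.integral_const, smul_eq_mul, sub_zero, mul_comm c]
  have hle := intervalIntegral.norm_integral_le_of_norm_le_const (a := 0) (b := π)
    (f := fun x => ‖u x‖ ^ 2 - c) fun x hx =>
      h x (Ioc_subset_Icc_self (uIoc_of_le Real.pi_nonneg ▸ hx))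
  rwa [← hsub, sub_zero, abs_of_pos Real.pi_pos, Real.norm_eq_abs] at hle

theorem mul_pi_le_pairing_self {u : ℝ → ℂ} (hu : ContinuousOn u (Icc 0 π)) {m : ℝ}
    (h : ∀ x ∈ Icc 0 π, m ≤ ‖u x‖ ^ 2) : m * π ≤ pairing u u := by
  have hle : ∫ _ in 0..π, m ≤ ∫ x in 0..π, ‖u x‖ ^ 2 :=
    intervalIntegral.integral_mono_on Real.pi_nonneg
      intervalIntegrable_const ((hu.norm.pow 2).intervalIntegrable_of_Icc Real.pi_nonneg) h
  rwa [← pairing_self_eq_integral, intervalIntegral.integral_const, smul_eq_mul, sub_zero,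
    mul_comm] at hle

theorem pairing_eq_mul_of_eqOn {u v u' v' : ℝ → ℂ} {r s : ℝ}
    (hu : EqOn u (fun x => r * u' x) (Icc 0 π)) (hv : EqOn v (fun x => s * v' x) (Icc 0 π)) :
    pairing u v = r * s * pairing u' v' := by
  rw [pairing, pairing, ← intervalIntegral.integral_const_mul]
  refine intervalIntegral.integral_congr fun x hx => ?_
  rw [uIcc_of_le Real.pi_nonneg] at hx
  simp only [hu hx, hv hx, map_mul, conj_ofReal]
  rw [mul_mul_mul_comm, ← ofReal_mul, re_ofReal_mul]

end Pairing

/-! ### The endpoint expansion for the canonical equation -/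

namespace DiracPotential

variable {D : DiracPotential}

theorem IsSolution.continuousOn {l : ℝ} {Z : ℝ → ℂ} (hZ : D.IsSolution l Z) :
    ContinuousOn Z (Icc 0 π) :=
  fun x hx => (hZ x hx).continuousWithinAt

variable (D) in
/-- The inhomogeneity `(μ - L) F`, where `L F = -i (F' - τ · conj F)` is the Dirac operator. -/
noncomputable def resolventSource (μ : ℝ) (F F' : ℝ → ℂ) (x : ℝ) : ℂ :=
  μ * F x + I * (F' x - D x * conj (F x))

section Green

variable {F F' Z : ℝ → ℂ} {l μ : ℝ}

theorem continuousOn_resolventSource (hF : ContinuousOn F (Icc 0 π))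
    (hF' : ContinuousOn F' (Icc 0 π)) : ContinuousOn (D.resolventSource μ F F') (Icc 0 π) :=
  (continuousOn_const.mul hF).add (continuousOn_const.mul
    (hF'.sub (D.contDiffOn.continuousOn.mul (continuous_conj.comp_continuousOn hF))))

theorem IsSolution.pairing_resolventSource (hZ : D.IsSolution l Z)
    (hF : ∀ x ∈ Icc 0 π, HasDerivWithinAt F (F' x) (Icc 0 π) x)
    (hF' : ContinuousOn F' (Icc 0 π)) : pairing (D.resolventSource μ F F') Z =
      (μ - l) * pairing F Z - ((F π * conj (Z π)).im - (F 0 * conj (Z 0)).im) := by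
  have hFc : ContinuousOn F (Icc 0 π) := fun x hx => (hF x hx).continuousWithinAt
  have hre {u : ℝ → ℂ} (hu : ContinuousOn u (Icc 0 π)) :
      ContinuousOn (fun x => (u x * conj (Z x)).re) (Icc 0 π) :=
    continuous_re.comp_continuousOn (hu.mul (continuous_conj.comp_continuousOn hZ.continuousOn))
  have hG := hre (continuousOn_resolventSource (D := D) (μ := μ) hFc hF')
  have hderiv (x : ℝ) (hx : x ∈ Icc 0 π) : HasDerivWithinAt (fun x => (F x * conj (Z x)).im)
      ((μ - l) * (F x * conj (Z x)).re - (D.resolventSource μ F F' x * conj (Z x)).re)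
      (Icc 0 π) x := by
    refine (hasDerivWithinAt_im ((hF x hx).mul (hZ x hx).star)).congr_deriv ?_
    simp [resolventSource]
    ring
  have hFZ := (hre hFc).intervalIntegrable_of_Icc (μ := volume) Real.pi_nonneg
  have hInt := integral_eq_sub_of_hasDerivWithinAt_Icc Real.pi_nonneg hderiv
    ((continuousOn_const.mul (hre hFc)).sub hG)
  rw [intervalIntegral.integral_sub (hFZ.const_mul _)
    (hG.intervalIntegrable_of_Icc Real.pi_nonneg), intervalIntegral.integral_const_mul] at hInt
  rw [← hInt, pairing, pairing]
  ring

theorem IsSolution.mul_pairing {Y : ℝ → ℂ} (hY : D.IsSolution μ Y) (hZ : D.IsSolution l Z) :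
    (μ - l) * pairing Y Z = (Y π * conj (Z π)).im - (Y 0 * conj (Z 0)).im := by
  have hY' : ContinuousOn (fun x => I * μ * Y x + D x * conj (Y x)) (Icc 0 π) :=
    (continuousOn_const.mul hY.continuousOn).add
      (D.contDiffOn.continuousOn.mul (continuous_conj.comp_continuousOn hY.continuousOn))
  have h := hZ.pairing_resolventSource (μ := μ) hY hY'
  have hzero (x : ℝ) : D.resolventSource μ Y (fun x => I * μ * Y x + D x * conj (Y x)) x = 0 := by
    rw [resolventSource, add_sub_cancel_right, ← mul_assoc, ← mul_assoc, I_mul_I]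
    ring
  have hpair : pairing (D.resolventSource μ Y fun x => I * μ * Y x + D x * conj (Y x)) Z = 0 := by
    simp [pairing, hzero]
  linarith

end Green

section Eigenfunctions

variable (D)

theorem im_sol_level_intCast (n : ℤ) : (D.sol (D.level n) π).im = 0 := by
  rw [sol_level_pi, im_ofReal_mul, exp_ofReal_mul_I_im, Real.sin_int_mul_pi, mul_zero]

theorem re_sol_level_add_half (k : ℤ) : (D.sol (D.level (k + 1 / 2)) π).re = 0 := by
  rw [sol_level_pi, re_ofReal_mul, exp_ofReal_mul_I_re,
    show ((k : ℝ) + 1 / 2) * π = π / 2 + k * π by ring, Real.cos_add_int_mul_pi,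
    Real.cos_pi_div_two, mul_zero, mul_zero]

theorem norm_sol (l x : ℝ) : ‖D.sol l x‖ = Real.exp (D.phase l x).re := by
  rw [sol, norm_mul_exp_mul_I, norm_real, Real.norm_of_nonneg (Real.exp_pos _).le]

theorem im_sol_level_add_half_ne_zero (k : ℤ) : (D.sol (D.level (k + 1 / 2)) π).im ≠ 0 := by
  intro h
  have hzero : D.sol (D.level (k + 1 / 2)) π = 0 := Complex.ext (D.re_sol_level_add_half k) h
  have hpos := Real.exp_pos (D.phase (D.level (k + 1 / 2)) π).re
  rw [← norm_sol, hzero, norm_zero] at hpos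
  exact hpos.false

/-- The value at `π` of the eigenfunction number `n`, which is real. -/
noncomputable def endValue (n : ℤ) : ℝ := (D.sol (D.level n) π).re

/-- The squared norm of the eigenfunction number `n`. -/
noncomputable def normSq (n : ℤ) : ℝ := pairing (D.sol (D.level n)) (D.sol (D.level n))

theorem sol_level_intCast_pi (n : ℤ) : D.sol (D.level n) π = D.endValue n :=
  Complex.ext rfl (D.im_sol_level_intCast n)

theorem pairing_sol_level_eq_zero {m n : ℤ} (h : m ≠ n) :
    pairing (D.sol (D.level m)) (D.sol (D.level n)) = 0 := by
  have hmul := (D.isSolution_sol (D.level m)).mul_pairing (D.isSolution_sol (D.level n))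
  rw [sol_level_intCast_pi, sol_level_intCast_pi, sol_zero, sol_zero, conj_ofReal, ← ofReal_mul,
    ofReal_im, map_one, mul_one, one_im, sub_zero] at hmul
  exact (mul_eq_zero.1 hmul).resolve_left (sub_ne_zero.2
    (D.strictMono_level.injective.ne (Int.cast_injective.ne h)))

theorem exists_pos_le_normSq : ∃ m, 0 < m ∧ ∀ n, m ≤ D.normSq n := by
  obtain ⟨C, hC0, hC⟩ := D.exists_norm_phase_level_le
  refine ⟨Real.exp (-C) ^ 2 * π, by positivity, fun n =>
    mul_pi_le_pairing_self (D.isSolution_sol _).continuousOn fun x hx => ?_⟩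
  have hphase : ‖D.phase (D.level n) x‖ ≤ C := ((hC n).2 x hx).trans
    (div_le_self hC0 (by linarith [abs_nonneg (n : ℝ)]))
  rw [norm_sol]
  gcongr
  exact (abs_le.1 ((abs_re_le_norm _).trans hphase)).1

theorem exists_norm_sol_level_sub_mode_le : ∃ C, 0 ≤ C ∧ ∀ n : ℤ, ∀ x ∈ Icc 0 π,
    ‖D.sol (D.level n) x - mode n x‖ ≤ C * decay n := by
  obtain ⟨C, hC0, hC⟩ := D.exists_norm_sol_level_sub_exp_le
  refine ⟨C, hC0, fun n x hx => (hC n x hx).trans_eq ?_⟩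
  rw [decay, mul_one_div]

theorem summable_pairing_sol_level_sub_mode : Summable fun n : ℤ =>
    pairing (D.sol (D.level n) - mode n) (D.sol (D.level n) - mode n) := by
  obtain ⟨C, -, hC⟩ := D.exists_norm_sol_level_sub_mode_le
  have hdecay : Summable fun n => decay n ^ 2 := by
    simpa only [Real.rpow_two] using summable_decay_rpow one_lt_two
  have hcont (n : ℤ) : ContinuousOn (D.sol (D.level n) - mode n) (Icc 0 π) :=
    (D.isSolution_sol _).continuousOn.sub (continuous_mode n).continuousOn
  refine Summable.of_norm_bounded (hdecay.mul_left (C ^ 2 * π)) fun n => ?_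
  have h := abs_pairing_self_sub_mul_pi_le (c := 0) (B := (C * decay n) ^ 2) (hcont n)
    fun x hx => by
      rw [sub_zero, abs_of_nonneg (sq_nonneg _)]
      exact pow_le_pow_left₀ (norm_nonneg _) (hC n x hx) 2
  rw [zero_mul, sub_zero] at h
  exact h.trans_eq (by ring)

theorem exists_abs_norm_sol_level_sq_sub_one_le : ∃ C, 0 ≤ C ∧ ∀ n : ℤ, ∀ x ∈ Icc 0 π,
    |‖D.sol (D.level n) x‖ ^ 2 - 1| ≤ C * decay n := by
  obtain ⟨C, hC0, hC⟩ := D.exists_norm_sol_level_sub_mode_le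
  refine ⟨C * (C + 2), mul_nonneg hC0 (by linarith), fun n x hx => ?_⟩
  have := decay_pos n
  have hdiff : |‖D.sol (D.level n) x‖ - 1| ≤ C * decay n := by
    rw [← norm_mode n x]
    exact (abs_norm_sub_norm_le _ _).trans (hC n x hx)
  have hsum : |‖D.sol (D.level n) x‖ + 1| ≤ C + 2 := by
    rw [abs_of_nonneg (by positivity)]
    nlinarith [(abs_le.1 hdiff).2, decay_le_one n]
  rw [← one_pow 2, sq_sub_sq, abs_mul]
  calc _ ≤ (C + 2) * (C * decay n) := by gcongr
    _ = C * (C + 2) * decay n := by ring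

end Eigenfunctions

end DiracPotential

section Limits

theorem abs_mul_div_sub_le {P e s N d C C' m : ℝ} (hP : 0 ≤ P) (hm : 0 < m) (hN : m ≤ N)
    (hs : |s| = 1) (he : |e - s| ≤ C * d) (hNP : |N - P| ≤ C' * d) :
    |P * e / N - s| ≤ (P * C + C') / m * d := by
  have hN0 : 0 < N := hm.trans_le hN
  have heq : P * e / N - s = (P * (e - s) - s * (N - P)) / N := by
    field_simp
    ring
  have hnum : |P * (e - s) - s * (N - P)| ≤ P * (C * d) + C' * d := by
    refine (abs_sub _ _).trans (add_le_add ?_ ?_)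
    · rw [abs_mul, abs_of_nonneg hP]
      gcongr
    · rwa [abs_mul, hs, one_mul]
  rw [heq, abs_div, abs_of_pos hN0]
  calc _ ≤ (P * (C * d) + C' * d) / m := by
        gcongr
        exact (abs_nonneg _).trans hnum
    _ = _ := by ring

theorem eq_zero_of_tendsto_neg_one_pow_mul {c l : ℝ}
    (h : Tendsto (fun k : ℕ => (-1) ^ k * c) atTop (𝓝 l)) : c = 0 := by
  have hneg : Tendsto (fun k : ℕ => -((-1) ^ k * c)) atTop (𝓝 l) := by
    exact (h.comp (tendsto_add_atTop_nat 1)).congr fun k => by simp [pow_succ]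
  have hl : l = 0 := self_eq_neg.1 (tendsto_nhds_unique hneg h.neg)
  have habs := h.abs
  simp only [abs_mul, abs_pow, abs_neg, abs_one, one_pow, one_mul, hl, abs_zero] at habs
  exact abs_eq_zero.1 (tendsto_nhds_unique tendsto_const_nhds habs)

end Limits

namespace DiracPotential

open SummationFilter

variable (D : DiracPotential) {F F' : ℝ → ℂ}

theorem hasSum_pairing_mul_pairing_div_normSq {u v : ℝ → ℂ} (hu : ContinuousOn u (Icc 0 π))
    (hv : ContinuousOn v (Icc 0 π)) :
    HasSum (fun n : ℤ => pairing u (D.sol (D.level n)) * pairing (D.sol (D.level n)) v /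
      D.normSq n) (pairing u v) := by
  obtain ⟨m, hm, hN⟩ := D.exists_pos_le_normSq
  exact hasSum_pairing_mul_pairing_div (fun n => (D.isSolution_sol _).continuousOn)
    (fun n => (hm.trans_le (hN n)).ne') (fun _ _ => D.pairing_sol_level_eq_zero)
    D.summable_pairing_sol_level_sub_mode hu hv

theorem exists_abs_weight_sub_le : ∃ C, ∀ n : ℤ,
    |π * D.endValue n ^ 2 / D.normSq n - 1| ≤ C * decay n ∧
      |π * D.endValue n / D.normSq n - (-1) ^ n| ≤ C * decay n := by
  obtain ⟨C, hC0, hC⟩ := D.exists_norm_sol_level_sub_mode_le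
  obtain ⟨B, hB0, hB⟩ := D.exists_abs_norm_sol_level_sq_sub_one_le
  obtain ⟨m, hm, hN⟩ := D.exists_pos_le_normSq
  have hpi : π ∈ Icc 0 π := right_mem_Icc.2 Real.pi_nonneg
  have hend (n : ℤ) : |D.endValue n - (-1) ^ n| ≤ C * decay n := by
    have h := hC n π hpi
    rwa [sol_level_intCast_pi, mode_pi, ← ofReal_sub, norm_real, Real.norm_eq_abs] at h
  have hend2 (n : ℤ) : |D.endValue n ^ 2 - 1| ≤ B * decay n := by
    have h := hB n π hpi
    rwa [sol_level_intCast_pi, norm_real, Real.norm_eq_abs, sq_abs] at h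
  have hnorm (n : ℤ) : |D.normSq n - π| ≤ B * π * decay n := by
    have h := abs_pairing_self_sub_mul_pi_le (D.isSolution_sol _).continuousOn (hB n)
    rwa [one_mul, mul_right_comm] at h
  refine ⟨(π * (B + C) + B * π) / m, fun n => ⟨?_, ?_⟩⟩
  · refine (abs_mul_div_sub_le Real.pi_nonneg hm (hN n) abs_one (hend2 n) (hnorm n)).trans ?_
    have := decay_pos n
    gcongr
    linarith
  · refine (abs_mul_div_sub_le Real.pi_nonneg hm (hN n) (by simp) (hend n) (hnorm n)).trans ?_
    have := decay_pos n
    gcongr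
    linarith

theorem exists_abs_level_sub_le : ∃ C c, 0 < c ∧ (∀ y, |D.level y - y| ≤ C / (1 + |y|)) ∧
    (∀ y z, c * |y - z| ≤ |D.level y - D.level z|) ∧ ∀ n : ℤ,
      |π * D.endValue n ^ 2 / D.normSq n - 1| ≤ C * decay n ∧
        |π * D.endValue n / D.normSq n - (-1) ^ n| ≤ C * decay n := by
  obtain ⟨C, -, hC⟩ := D.exists_norm_phase_level_le
  obtain ⟨B, hB⟩ := D.exists_abs_weight_sub_le
  obtain ⟨c, hc, hsep⟩ := D.exists_mul_abs_sub_le_abs_level_sub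
  refine ⟨max C B, c, hc, fun y => (hC y).1.trans ?_, hsep, fun n => ?_⟩
  · gcongr
    exact le_max_left _ _
  · have := decay_pos n
    have hle : B * decay n ≤ max C B * decay n := by
      gcongr
      exact le_max_right _ _
    exact ⟨(hB n).1.trans hle, (hB n).2.trans hle⟩

/-- The term of the eigenfunction expansion of `F` at `π` with index `n`. -/
noncomputable def endTerm (F : ℝ → ℂ) (n : ℤ) : ℝ :=
  pairing F (D.sol (D.level n)) * D.endValue n / D.normSq n

theorem tendsto_endTerm_cofinite (hF : ContinuousOn F (Icc 0 π)) :
    Tendsto (D.endTerm F) cofinite (𝓝 0) := by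
  obtain ⟨C, hC⟩ := D.exists_abs_weight_sub_le
  have hweight : Tendsto (fun n => π * D.endValue n ^ 2 / D.normSq n) cofinite (𝓝 1) := by
    refine tendsto_sub_nhds_zero_iff.1 (squeeze_zero_norm (fun n => (hC n).1) ?_)
    simpa using tendsto_decay_cofinite.const_mul C
  have hbessel := (D.hasSum_pairing_mul_pairing_div_normSq hF hF).summable.tendsto_cofinite_zero
  have hsq : Tendsto (fun n => D.endTerm F n ^ 2) cofinite (𝓝 0) := by
    have h := (hbessel.mul hweight).div_const π
    rw [zero_mul, zero_div] at h
    refine h.congr fun n => ?_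
    rw [endTerm, pairing_comm (D.sol _) F]
    field_simp
  refine tendsto_zero_iff_abs_tendsto_zero _ |>.2 ?_
  simpa [Function.comp_def, Real.sqrt_sq_eq_abs] using hsq.sqrt

/-- The imaginary endpoint value of the solution at the test parameter between the eigenvalues
number `k` and `k + 1`. -/
noncomputable def testValue (k : ℕ) : ℝ := (D.sol (D.level (k + 1 / 2)) π).im

theorem testValue_ne_zero (k : ℕ) : D.testValue k ≠ 0 := by
  have h := D.im_sol_level_add_half_ne_zero k
  rwa [Int.cast_natCast] at h

theorem sol_level_add_half_pi (k : ℕ) : D.sol (D.level (k + 1 / 2)) π = D.testValue k * I := by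
  refine Complex.ext ?_ ?_
  · simpa using D.re_sol_level_add_half k
  · simp [testValue]

theorem tendsto_neg_one_pow_div_testValue :
    Tendsto (fun k => (-1) ^ k / D.testValue k) atTop (𝓝 1) := by
  obtain ⟨C, hC0, hC⟩ := D.exists_norm_sol_level_sub_exp_le
  have hsq (k : ℕ) : (-1 : ℝ) ^ k * (-1) ^ k = 1 := by rw [← mul_pow]; simp
  have hclose (k : ℕ) : |(-1) ^ k * D.testValue k - 1| ≤ C / (1 + k) := by
    have h := hC (k + 1 / 2) π (right_mem_Icc.2 Real.pi_nonneg)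
    rw [sol_level_add_half_pi, exp_add_half_mul_pi_mul_I, ← sub_mul, norm_mul, norm_I,
      mul_one, ← ofReal_sub, norm_real, Real.norm_eq_abs] at h
    have : (0 : ℝ) ≤ k := k.cast_nonneg
    calc |(-1) ^ k * D.testValue k - 1| = |(-1) ^ k * (D.testValue k - (-1) ^ k)| := by
          rw [mul_sub, hsq]
      _ = |D.testValue k - (-1) ^ k| := by
          rw [abs_mul, abs_neg_one_pow, one_mul]
      _ ≤ C / (1 + k) := by
          refine h.trans ?_
          rw [abs_of_nonneg (by positivity)]
          gcongr
          linarith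
  have hlim : Tendsto (fun k => (-1) ^ k * D.testValue k) atTop (𝓝 1) := by
    refine tendsto_sub_nhds_zero_iff.1 (squeeze_zero_norm hclose ?_)
    exact tendsto_const_nhds.div_atTop
      (tendsto_atTop_add_const_left _ _ tendsto_natCast_atTop_atTop)
  have hinv := hlim.inv₀ one_ne_zero
  rw [inv_one] at hinv
  refine hinv.congr fun k => ?_
  rw [mul_inv, inv_eq_of_mul_eq_one_left (hsq k), div_eq_mul_inv]

theorem endTerm_eq (hF : ∀ x ∈ Icc 0 π, HasDerivWithinAt F (F' x) (Icc 0 π) x)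
    (hF' : ContinuousOn F' (Icc 0 π)) (k : ℕ) (n : ℤ) : D.endTerm F n =
      pairing (D.resolventSource (D.level (k + 1 / 2)) F F') (D.sol (D.level n)) *
        pairing (D.sol (D.level n)) (D.sol (D.level (k + 1 / 2))) / D.normSq n / D.testValue k +
      (F π).im / π *
        (π * D.endValue n ^ 2 / D.normSq n / (D.level (k + 1 / 2) - D.level n)) -
      (F 0).im / π *
        (π * D.endValue n / D.normSq n / (D.level (k + 1 / 2) - D.level n)) := by
  have hgap : D.level (k + 1 / 2) - D.level n ≠ 0 :=
    sub_ne_zero.2 (D.strictMono_level.injective.ne fun h => by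
      have hgap := half_le_abs_add_half_sub k n
      rw [Int.cast_natCast, h, sub_self, abs_zero] at hgap
      norm_num at hgap)
  have hN : D.normSq n ≠ 0 := by
    obtain ⟨m, hm, hN⟩ := D.exists_pos_le_normSq
    exact (hm.trans_le (hN n)).ne'
  have hsource := (D.isSolution_sol (D.level n)).pairing_resolventSource
    (μ := D.level (k + 1 / 2)) hF hF'
  have htest := (D.isSolution_sol (D.level (k + 1 / 2))).mul_pairing
    (D.isSolution_sol (D.level n))
  rw [sol_level_intCast_pi, sol_zero, map_one, mul_one, conj_ofReal, im_mul_ofReal] at hsource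
  rw [sol_level_intCast_pi, sol_zero, sol_zero, sol_level_add_half_pi, map_one, mul_one, one_im,
    sub_zero, conj_ofReal, im_mul_ofReal, im_ofReal_mul, I_im, mul_one, pairing_comm] at htest
  have hy := D.testValue_ne_zero k
  generalize D.level (k + 1 / 2) - D.level n = δ at hgap hsource htest ⊢
  have hpair : pairing (D.sol (D.level n)) (D.sol (D.level (k + 1 / 2))) =
      D.testValue k * D.endValue n / δ := by
    rw [← htest, mul_div_cancel_left₀ _ hgap]
  rw [hsource, hpair, endTerm]
  field_simp
  ring

theorem hasSum_pairing_resolventSource_div_testValue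
    (hF : ∀ x ∈ Icc 0 π, HasDerivWithinAt F (F' x) (Icc 0 π) x)
    (hF' : ContinuousOn F' (Icc 0 π)) (k : ℕ) : HasSum (fun n : ℤ =>
      pairing (D.resolventSource (D.level (k + 1 / 2)) F F') (D.sol (D.level n)) *
        pairing (D.sol (D.level n)) (D.sol (D.level (k + 1 / 2))) / D.normSq n / D.testValue k)
      ((F π).re + (F 0).im / D.testValue k) (symmetricIcc ℤ) := by
  have hFc : ContinuousOn F (Icc 0 π) := fun x hx => (hF x hx).continuousWithinAt
  have hZ := D.isSolution_sol (D.level (k + 1 / 2))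
  have hgreen := hZ.pairing_resolventSource (μ := D.level (k + 1 / 2)) hF hF'
  have hval : (F π * conj (D.testValue k * I)).im = -(D.testValue k * (F π).re) := by
    simp
    ring
  rw [sub_self, zero_mul, sol_zero, map_one, mul_one, sol_level_add_half_pi, hval] at hgreen
  have hy := D.testValue_ne_zero k
  have hlimit : (F π).re + (F 0).im / D.testValue k = pairing
      (D.resolventSource (D.level (k + 1 / 2)) F F') (D.sol (D.level (k + 1 / 2))) /
        D.testValue k := by
    rw [hgreen]
    field_simp
    ring
  rw [hlimit]
  exact ((D.hasSum_pairing_mul_pairing_div_normSq (continuousOn_resolventSource hFc hF')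
    hZ.continuousOn).div_const (D.testValue k)).mono_left LeAtTop.le_atTop

/-- Computing the sum with the Green identity at the test parameters `level (k + 1 / 2)` gives
`S = (F π).re + (-1) ^ k * (F 0).im * (1 - q / π) + o(1)`, where `q = ∑ (-1) ^ n / (1 / 2 - n)`.
As `S` does not depend on `k`, the oscillating term must vanish. -/
theorem hasSum_endTerm (hF : ∀ x ∈ Icc 0 π, HasDerivWithinAt F (F' x) (Icc 0 π) x)
    (hF' : ContinuousOn F' (Icc 0 π)) :
    HasSum (D.endTerm F) (F π).re (symmetricIcc ℤ) := by
  obtain ⟨C, c, hc, hL, hL', hweight⟩ := D.exists_abs_level_sub_le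
  obtain ⟨q, hq⟩ := exists_hasSum_div_half_sub (e := fun n => (-1) ^ n) (by simp)
    (fun n => by rw [zpow_neg, ← inv_zpow, inv_neg_one])
  obtain ⟨s, hs, hslim⟩ := exists_hasSum_div_sub_tendsto hc hL hL' abs_one
    (fun n => by rw [one_zpow]; exact (hweight n).1)
    (by simpa only [one_zpow] using hasSum_one_div_half_sub)
  obtain ⟨s', hs', hslim'⟩ := exists_hasSum_div_sub_tendsto hc hL hL' (by simp)
    (fun n => (hweight n).2) hq
  have hsum (k : ℕ) : HasSum (D.endTerm F) ((F π).re + (F 0).im / D.testValue k +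
      (F π).im / π * s k - (F 0).im / π * s' k) (symmetricIcc ℤ) := by
    rw [show D.endTerm F = _ from funext (D.endTerm_eq hF hF' k)]
    exact ((D.hasSum_pairing_resolventSource_div_testValue hF hF' k).add
      ((hs k).mul_left _)).sub ((hs' k).mul_left _)
  obtain ⟨S, hS⟩ : ∃ S, HasSum (D.endTerm F) S (symmetricIcc ℤ) := ⟨_, hsum 0⟩
  have hsign {u : ℕ → ℝ} (hu : Tendsto u atTop (𝓝 0)) :
      Tendsto (fun k => (-1) ^ k * u k) atTop (𝓝 0) :=
    squeeze_zero_norm (fun k => by simp) (tendsto_zero_iff_abs_tendsto_zero _ |>.1 hu)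
  have hlim := (((D.tendsto_neg_one_pow_div_testValue.const_mul (F 0).im).add
    ((hsign hslim).const_mul ((F π).im / π))).sub
      ((hsign hslim').const_mul ((F 0).im / π))).sub_const ((F 0).im / π * q)
  suffices S - (F π).re = 0 by rwa [← sub_eq_zero.1 this]
  refine eq_zero_of_tendsto_neg_one_pow_mul (hlim.congr fun k => ?_)
  have hsq : (-1 : ℝ) ^ k * (-1) ^ k = 1 := by rw [← mul_pow]; simp
  rw [hS.unique (hsum k)]
  linear_combination (F 0).im / π * q * hsq

end DiracPotential

theorem int_eq_add_of_strictMono_of_surjective {k : ℤ → ℤ} (hk : StrictMono k)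
    (hsurj : Function.Surjective k) (n : ℤ) : k n = n + k 0 := by
  have hsucc (n : ℤ) : k (n + 1) = k n + 1 :=
    (hk.orderIsoOfSurjective k hsurj).map_succ n
  induction n using Int.induction_on with
  | zero => simp
  | succ i ih => rw [hsucc, ih, add_right_comm]
  | pred i ih =>
    have h := hsucc (-(i : ℤ) - 1)
    rw [sub_add_cancel] at h
    linarith

namespace DiracPotential

open SummationFilter

variable {D : DiracPotential} {l μ : ℝ} {Y Z : ℝ → ℂ}

theorem IsSolution.eqOn (hY : D.IsSolution l Y) (hZ : D.IsSolution l Z) (h : Y 0 = Z 0) :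
    EqOn Y Z (Icc 0 π) := by
  obtain ⟨M, hM0, hM⟩ := D.exists_norm_le
  have hlip (x : ℝ) (hx : x ∈ Ico 0 π) : LipschitzOnWith (Real.nnabs l + ⟨M, hM0⟩)
      (fun z => I * l * z + D x * conj z) univ := by
    refine LipschitzOnWith.of_dist_le_mul fun z _ w _ => ?_
    rw [dist_eq_norm, dist_eq_norm]
    calc _ = ‖I * l * (z - w) + D x * conj (z - w)‖ := by
          rw [map_sub]
          ring_nf
      _ ≤ |l| * ‖z - w‖ + M * ‖z - w‖ := by
          refine norm_add_le_of_le ?_ ?_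
          · simp
          · rw [norm_mul, norm_conj]
            gcongr
            exact hM x (Ico_subset_Icc_self hx)
      _ = _ := by
          rw [← add_mul]
          rfl
  have hderiv {U : ℝ → ℂ} (hU : D.IsSolution l U) (x : ℝ) (hx : x ∈ Ico 0 π) :
      HasDerivWithinAt U (I * l * U x + D x * conj (U x)) (Ici x) x :=
    (hU x (Ico_subset_Icc_self hx)).mono_of_mem_nhdsWithin (Icc_mem_nhdsGE_of_mem hx)
  exact ODE_solution_unique_of_mem_Icc_right hlip hY.continuousOn (hderiv hY)
    (fun _ _ => mem_univ _) hZ.continuousOn (hderiv hZ) (fun _ _ => mem_univ _) h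

theorem IsSolution.ofReal_mul (hZ : D.IsSolution l Z) (r : ℝ) :
    D.IsSolution l fun x => r * Z x := fun x hx =>
  ((hZ x hx).const_mul (r : ℂ)).congr_deriv (by rw [map_mul, conj_ofReal]; ring)

/-- `Z` solves the canonical Dirac equation and the boundary conditions; `Z = 0` is allowed. -/
structure IsEigenfunction (D : DiracPotential) (l : ℝ) (Z : ℝ → ℂ) : Prop where
  isSolution : D.IsSolution l Z
  im_zero : (Z 0).im = 0
  im_pi : (Z π).im = 0

theorem IsEigenfunction.eqOn_sol (hZ : D.IsEigenfunction l Z) :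
    EqOn Z (fun x => (Z 0).re * D.sol l x) (Icc 0 π) :=
  hZ.isSolution.eqOn ((D.isSolution_sol l).ofReal_mul _)
    (Complex.ext (by simp) (by simp [hZ.im_zero]))

theorem IsEigenfunction.exists_level_eq (hZ : D.IsEigenfunction l Z) (hne : (Z 0).re ≠ 0) :
    ∃ k : ℤ, D.level k = l := by
  have hpi := hZ.im_pi
  rw [hZ.eqOn_sol (right_mem_Icc.2 Real.pi_nonneg), im_ofReal_mul, sol, im_ofReal_mul,
    exp_ofReal_mul_I_im] at hpi
  obtain ⟨k, hk⟩ := Real.sin_eq_zero_iff.1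
    (((mul_eq_zero.1 hpi).resolve_left hne |> mul_eq_zero.1).resolve_left (Real.exp_ne_zero _))
  exact ⟨k, D.level_eq_of_angle_pi_eq (by rw [← hk, mul_comm])⟩

theorem isEigenfunction_sol_level (n : ℤ) : D.IsEigenfunction (D.level n) (D.sol (D.level n)) :=
  ⟨D.isSolution_sol _, by simp, D.im_sol_level_intCast n⟩

theorem IsEigenfunction.pairing_eq_mul (hY : D.IsEigenfunction μ Y)
    (hZ : D.IsEigenfunction l Z) :
    pairing Y Z = (Y 0).re * (Z 0).re * pairing (D.sol μ) (D.sol l) :=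
  pairing_eq_mul_of_eqOn hY.eqOn_sol hZ.eqOn_sol

section Listing

variable {ν : ℤ → ℝ} {Z : ℤ → ℝ → ℂ}

theorem exists_eq_level_add (hν : Monotone ν) (hZ : ∀ n, D.IsEigenfunction (ν n) (Z n))
    (horth : ∀ m n, pairing (Z m) (Z n) = if m = n then 1 else 0)
    (hcomplete : ∀ k : ℤ, ∃ n, ν n = D.level k) : ∃ k : ℤ, ∀ n, ν n = D.level (n + k : ℤ) := by
  have hnorm (n : ℤ) : (Z n 0).re * (Z n 0).re * pairing (D.sol (ν n)) (D.sol (ν n)) = 1 := by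
    rw [← (hZ n).pairing_eq_mul (hZ n), horth, if_pos rfl]
  have hne (n : ℤ) : (Z n 0).re ≠ 0 :=
    left_ne_zero_of_mul (left_ne_zero_of_mul_eq_one (hnorm n))
  choose k hk using fun n => (hZ n).exists_level_eq (hne n)
  have hmono : Monotone k := fun m n hmn => by
    have h := hν hmn
    rwa [← hk m, ← hk n, D.strictMono_level.le_iff_le, Int.cast_le] at h
  have hinj : Function.Injective k := fun m n hmn => by
    by_contra hne'
    have hsol : D.sol (ν m) = D.sol (ν n) := by rw [← hk m, ← hk n, hmn]
    have hzero := horth m n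
    rw [(hZ m).pairing_eq_mul (hZ n), hsol, if_neg hne'] at hzero
    exact mul_ne_zero (mul_ne_zero (hne m) (hne n)) (right_ne_zero_of_mul_eq_one (hnorm n)) hzero
  have hsurj : Function.Surjective k := fun j => by
    obtain ⟨n, hn⟩ := hcomplete j
    exact ⟨n, Int.cast_injective (D.strictMono_level.injective ((hk n).trans hn))⟩
  refine ⟨k 0, fun n => ?_⟩
  rw [← int_eq_add_of_strictMono_of_surjective (hmono.strictMono_of_injective hinj) hsurj, hk]

theorem hasSum_pairing_mul_re_pi (hν : Monotone ν) (hZ : ∀ n, D.IsEigenfunction (ν n) (Z n))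
    (horth : ∀ m n, pairing (Z m) (Z n) = if m = n then 1 else 0)
    (hcomplete : ∀ k : ℤ, ∃ n, ν n = D.level k) {F F' : ℝ → ℂ}
    (hF : ∀ x ∈ Icc 0 π, HasDerivWithinAt F (F' x) (Icc 0 π) x)
    (hF' : ContinuousOn F' (Icc 0 π)) :
    HasSum (fun n => pairing F (Z n) * (Z n π).re) (F π).re (symmetricIcc ℤ) := by
  obtain ⟨k, hk⟩ := exists_eq_level_add hν hZ horth hcomplete
  have hterm (n : ℤ) : pairing F (Z n) * (Z n π).re = D.endTerm F (n + k) := by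
    have hnorm : (Z n 0).re * (Z n 0).re * D.normSq (n + k) = 1 := by
      rw [normSq, ← hk, ← (hZ n).pairing_eq_mul (hZ n), horth, if_pos rfl]
    have hpair : pairing F (Z n) = (Z n 0).re * pairing F (D.sol (D.level (n + k : ℤ))) := by
      rw [pairing_eq_mul_of_eqOn (r := 1) (u' := F) (fun x _ => by simp) (hZ n).eqOn_sol, one_mul,
        hk]
    have hend : (Z n π).re = (Z n 0).re * D.endValue (n + k) := by
      rw [(hZ n).eqOn_sol (right_mem_Icc.2 Real.pi_nonneg), re_ofReal_mul, hk, endValue]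
    rw [hpair, hend, endTerm, eq_div_iff (right_ne_zero_of_mul_eq_one hnorm)]
    linear_combination pairing F (D.sol (D.level (n + k : ℤ))) * D.endValue (n + k) * hnorm
  have hFc : ContinuousOn F (Icc 0 π) := fun x hx => (hF x hx).continuousWithinAt
  simpa only [hterm] using
    hasSum_symmetricIcc_comp_add (D.tendsto_endTerm_cofinite hFc) (D.hasSum_endTerm hF hF') k

end Listing

end DiracPotential

/-! ### Gauge and Liouville transformations -/

section TimeChange

theorem continuousOn_of_rightInvOn_of_isCompact {X Y : Type*} [TopologicalSpace X]
    [TopologicalSpace Y] [T2Space Y] {f : X → Y} {g : Y → X} {s : Set X} {t : Set Y}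
    (hs : IsCompact s) (hf : ContinuousOn f s) (hinj : InjOn f s) (hg : MapsTo g t s)
    (hfg : RightInvOn g f t) : ContinuousOn g t := by
  have : CompactSpace s := isCompact_iff_compactSpace.1 hs
  have hind : Topology.IsInducing (s.domRestrict f) :=
    (hf.domRestrict.isClosedEmbedding (injOn_iff_injective.1 hinj)).isInducing
  have hcont : Continuous (hg.restrict g t s) :=
    hind.continuous_iff.2 (continuous_subtype_val.congr fun y => (hfg y.2).symm)
  exact continuousOn_iff_continuous_domRestrict.2 (continuous_subtype_val.comp hcont)

theorem hasDerivWithinAt_of_rightInvOn {𝕜 : Type*} [NontriviallyNormedField 𝕜] {f g : 𝕜 → 𝕜}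
    {f' y : 𝕜} {s t : Set 𝕜} (hf : HasDerivWithinAt f f' s (g y)) (hf' : f' ≠ 0)
    (hgc : ContinuousOn g t) (hg : MapsTo g t s) (hfg : RightInvOn g f t) (hy : y ∈ t) :
    HasDerivWithinAt g f'⁻¹ t y := by
  have hequiv : HasFDerivWithinAt f
      (ContinuousLinearEquiv.unitsEquivAut 𝕜 (Units.mk0 f' hf') : 𝕜 →L[𝕜] 𝕜) s (g y) := hf
  exact hequiv.of_local_left_inverse ((hgc y hy).tendsto_nhdsWithin hg) hy
    (eventually_nhdsWithin_of_forall hfg)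

theorem hasDerivWithinAt_gauge_comp {z : ℝ → ℂ} {θ φ : ℝ → ℝ} {S T : Set ℝ} {s A θ' φ' : ℝ}
    {B : ℂ} (r : ℝ)
    (hz : HasDerivWithinAt z (I * A * z (φ s) + B * conj (z (φ s))) T (φ s))
    (hφ : HasDerivWithinAt φ φ' S s) (hmaps : MapsTo φ S T) (hθ : HasDerivWithinAt θ θ' S s) :
    HasDerivWithinAt (fun y => r * cexp (θ y * I) * z (φ y))
      (I * (φ' * A + θ' : ℝ) * (r * cexp (θ s * I) * z (φ s)) +
        φ' * B * cexp (2 * θ s * I) * conj (r * cexp (θ s * I) * z (φ s))) S s := by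
  have hexp : HasDerivWithinAt (fun y => (r : ℂ) * cexp (θ y * I))
      (r * (cexp (θ s * I) * (θ' * I))) S s := ((hθ.ofReal_comp.mul_const I).cexp).const_mul _
  refine (hexp.mul (hz.scomp s hφ hmaps)).congr_deriv ?_
  have hconj : cexp (2 * θ s * I) * conj (cexp (θ s * I)) = cexp (θ s * I) := by
    rw [← exp_conj, ← Complex.exp_add, map_mul, conj_ofReal, conj_I]; ring_nf
  simp only [map_mul, conj_ofReal, real_smul, ofReal_add, ofReal_mul, Function.comp_apply]
  linear_combination (-(φ' * B * r * conj (z (φ s)))) * hconj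

end TimeChange

section ComplexForm

theorem contDiffOn_ofReal_comp {w : ℝ → ℝ} {T : Set ℝ} {n : WithTop ℕ∞}
    (hw : ContDiffOn ℝ n w T) : ContDiffOn ℝ n (fun x => (w x : ℂ)) T :=
  ofRealCLM.contDiff.comp_contDiffOn hw

variable {a b l : ℝ} {p q t ρ f g : ℝ → ℝ}

/-- The complex encoding `g + if` of a real pair `(f, g)`. -/
def spinor (f g : ℝ → ℝ) (x : ℝ) : ℂ := ⟨g x, f x⟩

theorem exp_mul_I_mul_re (θ : ℝ) (z : ℂ) :
    (cexp (θ * I) * z).re = z.re * Real.cos θ - z.im * Real.sin θ := by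
  rw [mul_re, exp_ofReal_mul_I_re, exp_ofReal_mul_I_im]
  ring

theorem exp_mul_I_mul_im (θ : ℝ) (z : ℂ) :
    (cexp (θ * I) * z).im = z.im * Real.cos θ + z.re * Real.sin θ := by
  rw [mul_im, exp_ofReal_mul_I_re, exp_ofReal_mul_I_im]
  ring

theorem contDiffOn_spinor {n : WithTop ℕ∞} {s : Set ℝ} (hf : ContDiffOn ℝ n f s)
    (hg : ContDiffOn ℝ n g s) : ContDiffOn ℝ n (spinor f g) s :=
  ((contDiffOn_ofReal_comp hg).add ((contDiffOn_ofReal_comp hf).mul contDiffOn_const)).congr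
    fun _ _ => mk_eq_add_mul_I _ _

theorem dirac_rhs_eq (x : ℝ) (z : ℂ) :
    I * (l * ρ x - (p x + q x) / 2 : ℝ) * z + ⟨t x, (p x - q x) / 2⟩ * conj z =
      ⟨t x * z.re + (p x - l * ρ x) * z.im, -(t x * z.im + (q x - l * ρ x) * z.re)⟩ := by
  apply Complex.ext <;> simp <;> ring

theorem satisfiesDiracSystem_iff (hp : ContinuousOn p (Icc a b)) (hq : ContinuousOn q (Icc a b))
    (ht : ContinuousOn t (Icc a b)) (hρ : ContinuousOn ρ (Icc a b)) :
    SatisfiesDiracSystem a b p q t ρ l f g ↔ ∀ x ∈ Icc a b, HasDerivWithinAt (spinor f g)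
      (I * (l * ρ x - (p x + q x) / 2 : ℝ) * spinor f g x +
        ⟨t x, (p x - q x) / 2⟩ * conj (spinor f g x)) (Icc a b) x := by
  simp only [dirac_rhs_eq]
  constructor
  · rintro ⟨f', g', hf, hg, -, -, h₁, h₂⟩ x hx
    refine ((((hg x hx).ofReal_comp).add ((hf x hx).ofReal_comp.mul_const I)).congr_deriv ?_).congr
      (fun y _ => mk_eq_add_mul_I _ _) (mk_eq_add_mul_I _ _)
    rw [← mk_eq_add_mul_I]
    apply Complex.ext
    · simp only [spinor]
      linarith [h₁ x hx]
    · simp only [spinor]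
      linarith [h₂ x hx]
  · intro h
    have hf (x : ℝ) (hx : x ∈ Icc a b) := hasDerivWithinAt_im (h x hx)
    have hg (x : ℝ) (hx : x ∈ Icc a b) := hasDerivWithinAt_re (h x hx)
    have hfc : ContinuousOn f (Icc a b) := fun x hx => (hf x hx).continuousWithinAt
    have hgc : ContinuousOn g (Icc a b) := fun x hx => (hg x hx).continuousWithinAt
    exact ⟨_, _, hf, hg, by simp only [spinor]; fun_prop, by simp only [spinor]; fun_prop,
      fun x _ => by simp only [spinor]; ring, fun x _ => by simp only [spinor]; ring⟩

end ComplexForm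

/-- The data of the Dirac-type boundary value problem: the interval `[a, b]`, the coefficients,
and the boundary angles. -/
structure DiracProblem where
  (a b : ℝ)
  lt : a < b
  (p q t ρ : ℝ → ℝ)
  contDiffOn_p : ContDiffOn ℝ 1 p (Icc a b)
  contDiffOn_q : ContDiffOn ℝ 1 q (Icc a b)
  contDiffOn_t : ContDiffOn ℝ 1 t (Icc a b)
  contDiffOn_ρ : ContDiffOn ℝ 1 ρ (Icc a b)
  ρ_pos : ∀ x ∈ Icc a b, 0 < ρ x
  (α β : ℝ)

namespace DiracProblem

open SummationFilter

variable (P : DiracProblem) {l x s : ℝ} {f g : ℝ → ℝ} {u v z Z : ℝ → ℂ}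

/-- The coefficient of `i z` that does not depend on the spectral parameter, up to sign. -/
noncomputable def meanPotential (x : ℝ) : ℝ := (P.p x + P.q x) / 2

/-- The coefficient of `conj z` in the complex form of the Dirac system. -/
noncomputable def coupling (x : ℝ) : ℂ := ⟨P.t x, (P.p x - P.q x) / 2⟩

/-- The complex form of the Dirac system, for `z = g + if`. -/
def IsSolution (l : ℝ) (z : ℝ → ℂ) : Prop := ∀ x ∈ Icc P.a P.b, HasDerivWithinAt z
  (I * (l * P.ρ x - P.meanPotential x : ℝ) * z x + P.coupling x * conj (z x)) (Icc P.a P.b) x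

theorem isSolution_spinor_iff :
    P.IsSolution l (spinor f g) ↔ SatisfiesDiracSystem P.a P.b P.p P.q P.t P.ρ l f g :=
  (satisfiesDiracSystem_iff P.contDiffOn_p.continuousOn P.contDiffOn_q.continuousOn
    P.contDiffOn_t.continuousOn P.contDiffOn_ρ.continuousOn).symm

theorem continuousOn_meanPotential : ContinuousOn P.meanPotential (Icc P.a P.b) :=
  (P.contDiffOn_p.continuousOn.add P.contDiffOn_q.continuousOn).div_const 2

theorem contDiffOn_coupling : ContDiffOn ℝ 1 P.coupling (Icc P.a P.b) :=
  contDiffOn_spinor ((P.contDiffOn_p.sub P.contDiffOn_q).div_const 2) P.contDiffOn_t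

/-- The constant `c` by which the Liouville variable is scaled so that it ends at `π`. -/
noncomputable def scale : ℝ := (∫ x in P.a..P.b, P.ρ x) / π

theorem integral_ρ_pos : 0 < ∫ x in P.a..P.b, P.ρ x :=
  intervalIntegral.integral_pos P.lt P.contDiffOn_ρ.continuousOn
    (fun x hx => (P.ρ_pos x (Ioc_subset_Icc_self hx)).le)
    ⟨P.a, left_mem_Icc.2 P.lt.le, P.ρ_pos _ (left_mem_Icc.2 P.lt.le)⟩

theorem scale_pos : 0 < P.scale := div_pos P.integral_ρ_pos Real.pi_pos

/-- The shift `σ` of the spectral parameter under which the gauge angle joins `α` to `β`. -/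
noncomputable def offset : ℝ :=
  (P.α - P.β + ∫ x in P.a..P.b, P.meanPotential x) / ∫ x in P.a..P.b, P.ρ x

/-- The angle of the gauge transformation that removes the mean potential and turns both boundary
conditions into the vanishing of the imaginary part. -/
noncomputable def gauge (x : ℝ) : ℝ :=
  P.α + ∫ y in P.a..x, (P.meanPotential y - P.offset * P.ρ y)

@[simp] theorem gauge_a : P.gauge P.a = P.α := by simp [gauge]

@[simp] theorem gauge_b : P.gauge P.b = P.β := by
  rw [gauge, intervalIntegral.integral_sub
      (P.continuousOn_meanPotential.intervalIntegrable_of_Icc P.lt.le)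
      ((P.contDiffOn_ρ.continuousOn.intervalIntegrable_of_Icc P.lt.le).const_mul _),
    intervalIntegral.integral_const_mul, offset, div_mul_cancel₀ _ P.integral_ρ_pos.ne']
  ring

theorem continuousOn_deriv_gauge :
    ContinuousOn (fun x => P.meanPotential x - P.offset * P.ρ x) (Icc P.a P.b) :=
  P.continuousOn_meanPotential.sub (P.contDiffOn_ρ.continuousOn.const_mul _)

theorem hasDerivWithinAt_gauge (hx : x ∈ Icc P.a P.b) :
    HasDerivWithinAt P.gauge (P.meanPotential x - P.offset * P.ρ x) (Icc P.a P.b) x :=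
  (hasDerivWithinAt_integral_Icc P.continuousOn_deriv_gauge hx).const_add _

theorem contDiffOn_gauge : ContDiffOn ℝ 1 P.gauge (Icc P.a P.b) :=
  contDiffOn_one_of_hasDerivWithinAt_Icc P.lt (fun _ hx => P.hasDerivWithinAt_gauge hx)
    P.continuousOn_deriv_gauge

/-- Liouville's change of variable `ξ : [a, b] → [0, π]`, which makes the weight constant. -/
noncomputable def liouville (x : ℝ) : ℝ := (∫ y in P.a..x, P.ρ y) / P.scale

@[simp] theorem liouville_a : P.liouville P.a = 0 := by simp [liouville]

@[simp] theorem liouville_b : P.liouville P.b = π := by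
  rw [liouville, scale, div_div_cancel₀ P.integral_ρ_pos.ne']

theorem hasDerivWithinAt_liouville (hx : x ∈ Icc P.a P.b) :
    HasDerivWithinAt P.liouville (P.ρ x / P.scale) (Icc P.a P.b) x :=
  (hasDerivWithinAt_integral_Icc P.contDiffOn_ρ.continuousOn hx).div_const _

theorem continuousOn_liouville : ContinuousOn P.liouville (Icc P.a P.b) :=
  fun _ hx => (P.hasDerivWithinAt_liouville hx).continuousWithinAt

theorem strictMonoOn_liouville : StrictMonoOn P.liouville (Icc P.a P.b) :=
  strictMonoOn_of_hasDerivWithinAt_pos (convex_Icc _ _) P.continuousOn_liouville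
    (fun _ hx => (P.hasDerivWithinAt_liouville (interior_subset hx)).mono interior_subset)
    fun _ hx => div_pos (P.ρ_pos _ (interior_subset hx)) P.scale_pos

theorem mapsTo_liouville : MapsTo P.liouville (Icc P.a P.b) (Icc 0 π) := by
  simpa using P.strictMonoOn_liouville.monotoneOn.mapsTo_Icc

theorem surjOn_liouville : SurjOn P.liouville (Icc P.a P.b) (Icc 0 π) := by
  simpa [SurjOn] using intermediate_value_Icc P.lt.le P.continuousOn_liouville

/-- The inverse `η : [0, π] → [a, b]` of Liouville's change of variable. -/
noncomputable def liouvilleInv : ℝ → ℝ := Function.invFunOn P.liouville (Icc P.a P.b)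

theorem mapsTo_liouvilleInv : MapsTo P.liouvilleInv (Icc 0 π) (Icc P.a P.b) :=
  P.surjOn_liouville.mapsTo_invFunOn

theorem liouvilleInv_mem (hs : s ∈ Icc 0 π) : P.liouvilleInv s ∈ Icc P.a P.b :=
  P.mapsTo_liouvilleInv hs

theorem liouvilleInv_liouville (hx : x ∈ Icc P.a P.b) : P.liouvilleInv (P.liouville x) = x :=
  P.strictMonoOn_liouville.injOn.leftInvOn_invFunOn hx

@[simp] theorem liouvilleInv_zero : P.liouvilleInv 0 = P.a := by
  simpa using P.liouvilleInv_liouville (left_mem_Icc.2 P.lt.le)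

@[simp] theorem liouvilleInv_pi : P.liouvilleInv π = P.b := by
  simpa using P.liouvilleInv_liouville (right_mem_Icc.2 P.lt.le)

theorem continuousOn_liouvilleInv : ContinuousOn P.liouvilleInv (Icc 0 π) :=
  continuousOn_of_rightInvOn_of_isCompact isCompact_Icc P.continuousOn_liouville
    P.strictMonoOn_liouville.injOn P.mapsTo_liouvilleInv P.surjOn_liouville.rightInvOn_invFunOn

theorem hasDerivWithinAt_liouvilleInv (hs : s ∈ Icc 0 π) :
    HasDerivWithinAt P.liouvilleInv (P.scale / P.ρ (P.liouvilleInv s)) (Icc 0 π) s := by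
  have hη := P.liouvilleInv_mem hs
  rw [← inv_div]
  exact hasDerivWithinAt_of_rightInvOn (P.hasDerivWithinAt_liouville hη)
    (div_pos (P.ρ_pos _ hη) P.scale_pos).ne' P.continuousOn_liouvilleInv P.mapsTo_liouvilleInv
    P.surjOn_liouville.rightInvOn_invFunOn hs

theorem continuousOn_deriv_liouvilleInv :
    ContinuousOn (fun s => P.scale / P.ρ (P.liouvilleInv s)) (Icc 0 π) :=
  continuousOn_const.div
    (P.contDiffOn_ρ.continuousOn.comp P.continuousOn_liouvilleInv P.mapsTo_liouvilleInv)
    fun _ hs => (P.ρ_pos _ (P.liouvilleInv_mem hs)).ne'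

theorem contDiffOn_liouvilleInv : ContDiffOn ℝ 1 P.liouvilleInv (Icc 0 π) :=
  contDiffOn_one_of_hasDerivWithinAt_Icc Real.pi_pos
    (fun _ hs => P.hasDerivWithinAt_liouvilleInv hs) P.continuousOn_deriv_liouvilleInv

/-- The potential of the canonical equation to which the problem is reduced. -/
noncomputable def potential : DiracPotential where
  toFun s := (P.scale / P.ρ (P.liouvilleInv s) : ℝ) * P.coupling (P.liouvilleInv s) *
    cexp (2 * P.gauge (P.liouvilleInv s) * I)
  contDiffOn := by
    have hρ := contDiffOn_ofReal_comp
      (contDiffOn_const (c := P.scale).div P.contDiffOn_ρ fun x hx => (P.ρ_pos x hx).ne')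
    have hexp := ((contDiffOn_const (c := (2 : ℂ)).mul
      (contDiffOn_ofReal_comp P.contDiffOn_gauge)).mul (contDiffOn_const (c := I))).cexp
    exact ((hρ.mul P.contDiffOn_coupling).mul hexp).comp P.contDiffOn_liouvilleInv
      P.mapsTo_liouvilleInv

theorem potential_apply (s : ℝ) : P.potential s =
    (P.scale / P.ρ (P.liouvilleInv s) : ℝ) * P.coupling (P.liouvilleInv s) *
      cexp (2 * P.gauge (P.liouvilleInv s) * I) := rfl

/-- The gauged and reparametrized form of `z`; the factor `√c` makes the passage isometric. -/
noncomputable def toCanonical (z : ℝ → ℂ) (s : ℝ) : ℂ :=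
  √P.scale * cexp (P.gauge (P.liouvilleInv s) * I) * z (P.liouvilleInv s)

/-- The inverse of `toCanonical`. -/
noncomputable def ofCanonical (Z : ℝ → ℂ) (x : ℝ) : ℂ :=
  ((√P.scale)⁻¹ : ℝ) * cexp ((-P.gauge x : ℝ) * I) * Z (P.liouville x)

variable {P}

theorem toCanonical_zero : P.toCanonical z 0 = √P.scale * (cexp (P.α * I) * z P.a) := by
  rw [toCanonical, liouvilleInv_zero, gauge_a, mul_assoc]

theorem toCanonical_pi : P.toCanonical z π = √P.scale * (cexp (P.β * I) * z P.b) := by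
  rw [toCanonical, liouvilleInv_pi, gauge_b, mul_assoc]

theorem exp_gauge_mul_ofCanonical (x : ℝ) : cexp (P.gauge x * I) * P.ofCanonical Z x =
    ((√P.scale)⁻¹ : ℝ) * Z (P.liouville x) := by
  have hexp : cexp (P.gauge x * I) * cexp ((-P.gauge x : ℝ) * I) = 1 := by
    rw [← Complex.exp_add, ofReal_neg, neg_mul, add_neg_cancel, Complex.exp_zero]
  rw [ofCanonical]
  linear_combination ((√P.scale)⁻¹ : ℝ) * Z (P.liouville x) * hexp

theorem contDiffOn_toCanonical (hz : ContDiffOn ℝ 1 z (Icc P.a P.b)) :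
    ContDiffOn ℝ 1 (P.toCanonical z) (Icc 0 π) :=
  ((contDiffOn_const.mul ((contDiffOn_ofReal_comp P.contDiffOn_gauge).mul
    contDiffOn_const).cexp).mul hz).comp P.contDiffOn_liouvilleInv P.mapsTo_liouvilleInv

theorem IsSolution.toCanonical (hz : P.IsSolution l z) :
    P.potential.IsSolution (P.scale * (l - P.offset)) (P.toCanonical z) := fun s hs => by
  have hη := P.liouvilleInv_mem hs
  have hρ := (P.ρ_pos _ hη).ne'
  have hη' := P.hasDerivWithinAt_liouvilleInv hs
  refine (hasDerivWithinAt_gauge_comp √P.scale (hz _ hη) hη' P.mapsTo_liouvilleInv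
    ((P.hasDerivWithinAt_gauge hη).comp s hη' P.mapsTo_liouvilleInv)).congr_deriv ?_
  congr 4
  field_simp
  ring

theorem isSolution_ofCanonical (hZ : P.potential.IsSolution (P.scale * (l - P.offset)) Z) :
    P.IsSolution l (P.ofCanonical Z) := fun x hx => by
  have hc := P.scale_pos.ne'
  have hρ := (P.ρ_pos _ hx).ne'
  have hcoupling : ((P.ρ x / P.scale : ℝ) : ℂ) * P.potential (P.liouville x) *
      cexp (2 * (-P.gauge x : ℝ) * I) = P.coupling x := by
    have hexp : cexp (2 * P.gauge x * I) * cexp (2 * (-P.gauge x : ℝ) * I) = 1 := by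
      rw [← Complex.exp_add, ofReal_neg, mul_neg, neg_mul, add_neg_cancel, Complex.exp_zero]
    have hscale : ((P.ρ x / P.scale : ℝ) : ℂ) * (P.scale / P.ρ x : ℝ) = 1 := by
      rw [← ofReal_mul, div_mul_div_cancel₀ hc, div_self hρ, ofReal_one]
    rw [potential_apply, P.liouvilleInv_liouville hx]
    calc _ = ((P.ρ x / P.scale : ℝ) * (P.scale / P.ρ x : ℝ)) * P.coupling x *
          (cexp (2 * P.gauge x * I) * cexp (2 * (-P.gauge x : ℝ) * I)) := by ring
      _ = P.coupling x := by rw [hscale, hexp, one_mul, mul_one]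
  refine (hasDerivWithinAt_gauge_comp (√P.scale)⁻¹ (hZ _ (P.mapsTo_liouville hx))
    (P.hasDerivWithinAt_liouville hx) P.mapsTo_liouville
    (P.hasDerivWithinAt_gauge hx).neg).congr_deriv ?_
  rw [ofCanonical, ← hcoupling]
  congr 4
  field_simp
  ring

theorem re_toCanonical_mul_conj (u v : ℝ → ℂ) (s : ℝ) :
    (P.toCanonical u s * conj (P.toCanonical v s)).re =
      P.scale * (u (P.liouvilleInv s) * conj (v (P.liouvilleInv s))).re := by
  have hsqrt : (√P.scale : ℂ) * √P.scale = P.scale := by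
    rw [← ofReal_mul, Real.mul_self_sqrt P.scale_pos.le]
  have hexp (θ : ℝ) : cexp (θ * I) * conj (cexp (θ * I)) = 1 := by
    rw [mul_conj, normSq_eq_norm_sq, norm_exp_ofReal_mul_I, one_pow, ofReal_one]
  rw [← re_ofReal_mul, toCanonical, toCanonical]
  congr 1
  simp only [map_mul, conj_ofReal]
  rw [mul_mul_mul_comm, mul_mul_mul_comm (√P.scale : ℂ), hsqrt, hexp, mul_one]

theorem pairing_toCanonical (hu : ContinuousOn u (Icc P.a P.b))
    (hv : ContinuousOn v (Icc P.a P.b)) : pairing (P.toCanonical u) (P.toCanonical v) =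
      ∫ x in P.a..P.b, P.ρ x * (u x * conj (v x)).re := by
  have hIcc : uIcc 0 π = Icc 0 π := uIcc_of_le Real.pi_nonneg
  rw [← P.liouvilleInv_zero, ← P.liouvilleInv_pi, ← intervalIntegral.integral_comp_mul_deriv''
    (f' := fun s => P.scale / P.ρ (P.liouvilleInv s))]
  · refine intervalIntegral.integral_congr fun s hs => ?_
    have hρ := (P.ρ_pos _ (P.liouvilleInv_mem (hIcc ▸ hs))).ne'
    simp only [re_toCanonical_mul_conj, Function.comp_apply]
    field_simp
  · rw [hIcc]
    exact P.continuousOn_liouvilleInv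
  · rw [min_eq_left Real.pi_nonneg, max_eq_right Real.pi_nonneg]
    exact fun s hs => ((P.hasDerivWithinAt_liouvilleInv (Ioo_subset_Icc_self hs)).hasDerivAt
      (Icc_mem_nhds hs.1 hs.2)).hasDerivWithinAt
  · rw [hIcc]
    exact P.continuousOn_deriv_liouvilleInv
  · rw [hIcc]
    refine (P.contDiffOn_ρ.continuousOn.mul ?_).mono P.mapsTo_liouvilleInv.image_subset
    exact continuous_re.comp_continuousOn (hu.mul (continuous_conj.comp_continuousOn hv))

theorem isEigenfunction_toCanonical (hsys : SatisfiesDiracSystem P.a P.b P.p P.q P.t P.ρ l f g)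
    (hbc : DiracBC P.a P.b P.α P.β f g) :
    P.potential.IsEigenfunction (P.scale * (l - P.offset)) (P.toCanonical (spinor f g)) where
  isSolution := (P.isSolution_spinor_iff.2 hsys).toCanonical
  im_zero := by
    rw [toCanonical_zero, im_ofReal_mul, exp_mul_I_mul_im]
    exact mul_eq_zero_of_right _ hbc.1
  im_pi := by
    rw [toCanonical_pi, im_ofReal_mul, exp_mul_I_mul_im]
    exact mul_eq_zero_of_right _ hbc.2

theorem isDiracEigenvalue_of_isEigenfunction {Z : ℝ → ℂ}
    (hZ : P.potential.IsEigenfunction (P.scale * (l - P.offset)) Z) (hne : Z 0 ≠ 0) :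
    IsDiracEigenvalue P.a P.b P.p P.q P.t P.ρ P.α P.β l := by
  have ha : cexp (P.α * I) * P.ofCanonical Z P.a = ((√P.scale)⁻¹ : ℝ) * Z 0 := by
    simpa using exp_gauge_mul_ofCanonical (P := P) (Z := Z) P.a
  have hb : cexp (P.β * I) * P.ofCanonical Z P.b = ((√P.scale)⁻¹ : ℝ) * Z π := by
    simpa using exp_gauge_mul_ofCanonical (P := P) (Z := Z) P.b
  refine ⟨fun x => (P.ofCanonical Z x).im, fun x => (P.ofCanonical Z x).re,
    P.isSolution_spinor_iff.1 (isSolution_ofCanonical hZ.isSolution),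
    ⟨P.a, left_mem_Icc.2 P.lt.le, ?_⟩, ?_, ?_⟩
  · by_contra! h
    have hzero : P.ofCanonical Z P.a = 0 := Complex.ext h.2 h.1
    rw [hzero, mul_zero, eq_comm] at ha
    exact mul_ne_zero (ofReal_ne_zero.2 (inv_ne_zero (Real.sqrt_pos.2 P.scale_pos).ne')) hne ha
  · rw [← exp_mul_I_mul_im, ha, im_ofReal_mul, hZ.im_zero, mul_zero]
  · rw [← exp_mul_I_mul_im, hb, im_ofReal_mul, hZ.im_pi, mul_zero]

theorem isDiracEigenvalue_level (k : ℤ) : IsDiracEigenvalue P.a P.b P.p P.q P.t P.ρ P.α P.β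
    (P.potential.level k / P.scale + P.offset) := by
  have hlevel : P.scale * (P.potential.level k / P.scale + P.offset - P.offset) =
      P.potential.level k := by
    rw [add_sub_cancel_right, mul_div_cancel₀ _ P.scale_pos.ne']
  refine isDiracEigenvalue_of_isEigenfunction (Z := P.potential.sol (P.potential.level k)) ?_
    (by simp)
  rw [hlevel]
  exact DiracPotential.isEigenfunction_sol_level k

theorem pairing_toCanonical_spinor {f' g' : ℝ → ℝ} (hf : ContinuousOn (spinor f g) (Icc P.a P.b))
    (hf' : ContinuousOn (spinor f' g') (Icc P.a P.b)) :
    pairing (P.toCanonical (spinor f g)) (P.toCanonical (spinor f' g')) =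
      ∫ x in P.a..P.b, P.ρ x * (f x * f' x + g x * g' x) := by
  rw [pairing_toCanonical hf hf']
  refine intervalIntegral.integral_congr fun x _ => ?_
  simp only [spinor, mul_re, conj_re, conj_im]
  ring

theorem hasSum_coeff_mul_end {lam : ℤ → ℝ} {f g : ℤ → ℝ → ℝ} {F₁ F₂ : ℝ → ℝ}
    (heig : ∀ n, SatisfiesDiracSystem P.a P.b P.p P.q P.t P.ρ (lam n) (f n) (g n) ∧
      DiracBC P.a P.b P.α P.β (f n) (g n))
    (hlam : Monotone lam)
    (hcomplete : ∀ μ, IsDiracEigenvalue P.a P.b P.p P.q P.t P.ρ P.α P.β μ → ∃ n, lam n = μ)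
    (horth : ∀ m n, (∫ x in P.a..P.b, P.ρ x * (f m x * f n x + g m x * g n x)) =
      if m = n then 1 else 0)
    (hF₁ : ContDiffOn ℝ 1 F₁ (Icc P.a P.b)) (hF₂ : ContDiffOn ℝ 1 F₂ (Icc P.a P.b)) :
    HasSum (fun n => (∫ x in P.a..P.b, P.ρ x * (f n x * F₁ x + g n x * F₂ x)) *
        (g n P.b * Real.cos P.β - f n P.b * Real.sin P.β))
      (F₂ P.b * Real.cos P.β - F₁ P.b * Real.sin P.β) (symmetricIcc ℤ) := by
  have hcont (n : ℤ) : ContinuousOn (spinor (f n) (g n)) (Icc P.a P.b) := fun x hx =>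
    (P.isSolution_spinor_iff.2 (heig n).1 x hx).continuousWithinAt
  have hF := contDiffOn_spinor hF₁ hF₂
  have hF' := contDiffOn_toCanonical hF
  have hν : Monotone fun n => P.scale * (lam n - P.offset) := fun m n hmn =>
    mul_le_mul_of_nonneg_left (sub_le_sub_right (hlam hmn) _) P.scale_pos.le
  have hlevel (k : ℤ) : ∃ n, P.scale * (lam n - P.offset) = P.potential.level k := by
    obtain ⟨n, hn⟩ := hcomplete _ (isDiracEigenvalue_level k)
    exact ⟨n, by rw [hn, add_sub_cancel_right, mul_div_cancel₀ _ P.scale_pos.ne']⟩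
  have hsum := DiracPotential.hasSum_pairing_mul_re_pi hν
    (fun n => isEigenfunction_toCanonical (heig n).1 (heig n).2)
    (fun m n => (pairing_toCanonical_spinor (hcont m) (hcont n)).trans (horth m n)) hlevel
    (fun x hx => ((hF'.differentiableOn one_ne_zero) x hx).hasDerivWithinAt)
    ((contDiffOn_one_iff_derivWithin (uniqueDiffOn_Icc Real.pi_pos)).1 hF').2
  have hscale : √P.scale ≠ 0 := (Real.sqrt_pos.2 P.scale_pos).ne'
  have hend (f g : ℝ → ℝ) : (P.toCanonical (spinor f g) π).re =
      √P.scale * (g P.b * Real.cos P.β - f P.b * Real.sin P.β) := by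
    rw [toCanonical_pi, re_ofReal_mul, exp_mul_I_mul_re]
    rfl
  simp only [hend, pairing_comm (P.toCanonical (spinor F₁ F₂)),
    pairing_toCanonical_spinor (hcont _) hF.continuousOn, mul_left_comm _ (√P.scale)] at hsum
  exact (hasSum_mul_left_iff hscale).1 hsum

end DiracProblem

end DiracExpansion

/-- At the right endpoint `x = b` the symmetric partial sums converge to
`(sin²β F₁(b) - sin β cos β F₂(b), -sin β cos β F₁(b) + cos²β F₂(b))`. -/
theorem dirac_expansion_right_endpoint
    (a b : ℝ) (hab : a < b)
    (p q t ρ : ℝ → ℝ)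
    (hp : ContDiffOn ℝ 1 p (Set.Icc a b)) (hq : ContDiffOn ℝ 1 q (Set.Icc a b))
    (ht : ContDiffOn ℝ 1 t (Set.Icc a b)) (hρ : ContDiffOn ℝ 1 ρ (Set.Icc a b))
    (hρpos : ∀ x ∈ Set.Icc a b, 0 < ρ x)
    (α β : ℝ) (hα : α ∈ Set.Ico 0 (2 * Real.pi)) (hβ : β ∈ Set.Ico 0 (2 * Real.pi))
    -- the listing of all eigenvalues with eigenfunctions
    (lam : ℤ → ℝ) (f g : ℤ → ℝ → ℝ)
    (heig : ∀ n : ℤ, SatisfiesDiracSystem a b p q t ρ (lam n) (f n) (g n) ∧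
      DiracBC a b α β (f n) (g n))
    (hord : ∀ n : ℤ, lam n ≤ lam (n + 1))
    (hgrow : Filter.Tendsto (fun n : ℤ => |lam n|) Filter.cofinite Filter.atTop)
    (hcomplete : ∀ μ : ℝ, IsDiracEigenvalue a b p q t ρ α β μ → ∃ n, lam n = μ)
    (horth : ∀ m n : ℤ,
      (∫ x in a..b, ρ x * (f m x * f n x + g m x * g n x)) = if m = n then 1 else 0)
    -- the expanded function and its expansion coefficients
    (F₁ F₂ : ℝ → ℝ)
    (hF₁ : ContDiffOn ℝ 1 F₁ (Set.Icc a b)) (hF₂ : ContDiffOn ℝ 1 F₂ (Set.Icc a b))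
    (C : ℤ → ℝ)
    (hC : ∀ n, C n = ∫ x in a..b, ρ x * (f n x * F₁ x + g n x * F₂ x)) :
    Filter.Tendsto
      (fun N : ℕ =>
        ((∑ n ∈ Finset.Icc (-(N : ℤ)) (N : ℤ), C n * f n b),
         (∑ n ∈ Finset.Icc (-(N : ℤ)) (N : ℤ), C n * g n b)))
      Filter.atTop
      (nhds (Real.sin β ^ 2 * F₁ b - Real.sin β * Real.cos β * F₂ b,
             -(Real.sin β * Real.cos β) * F₁ b + Real.cos β ^ 2 * F₂ b)) := by
  let P : DiracProblem := ⟨a, b, hab, p, q, t, ρ, hp, hq, ht, hρ, hρpos, α, β⟩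
  have hsum := P.hasSum_coeff_mul_end heig (monotone_int_of_le_succ hord) hcomplete horth hF₁ hF₂
  have hlim : Filter.Tendsto (fun N : ℕ => ∑ n ∈ Finset.Icc (-(N : ℤ)) N,
      C n * (g n b * Real.cos β - f n b * Real.sin β)) Filter.atTop
      (nhds (F₂ b * Real.cos β - F₁ b * Real.sin β)) := by
    simpa only [hC] using SummationFilter.hasSum_symmetricIcc_iff.1 hsum
  have hf (n : ℤ) : C n * f n b =
      -Real.sin β * (C n * (g n b * Real.cos β - f n b * Real.sin β)) := by
    linear_combination C n * Real.cos β * (heig n).2.2 - C n * f n b * Real.sin_sq_add_cos_sq β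
  have hg (n : ℤ) : C n * g n b =
      Real.cos β * (C n * (g n b * Real.cos β - f n b * Real.sin β)) := by
    linear_combination C n * Real.sin β * (heig n).2.2 - C n * g n b * Real.sin_sq_add_cos_sq β
  simp only [hf, hg, ← Finset.mul_sum]
  convert (hlim.const_mul (-Real.sin β)).prodMk_nhds (hlim.const_mul (Real.cos β)) using 3 <;> ring
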